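/- Let U be a connected open neighborhood of 0 in ℂ⁴ and let (f, g, h, e) be holomorphic functions on U that are tangent to Q on U. Then there exist unique parameters d, κ, l, n ∈ ℝ and a, b, c, m, M, N ∈ ℂ such that on U: f(z₁,z₂,ζ,w) = a − 2·conj(c)·z₂ + i·κ·ζ + M·z₁ + m·ζ² + 2i·conj(N)·z₁·ζ + N·w, g = b + (2M − 3l)·z₂ − conj(m)·ζ + 2i·conj(N)·z₂·ζ − i·N·z₁ + i·n·ζ², h = c + (3l − conj(M))·ζ + i·conj(N)·ζ², e = d + 2i·conj(a)·ζ + 2i·conj(c)·z₁ + 2i·conj(b)·ζ² + 3l·w + 2i·conj(N)·ζ·w. Consequently, the real vector space of germs at 0 of holomorphic 4-tuples tangent to Q near 0 has dimension exactly 16. -/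

import Mathlib

open Complex ComplexConjugate Filter Topology

/-- Coordinates on `ℂ⁴`: `p 0, p 1` are `z₁, z₂`; `p 2` is `ζ`; `p 3` is `w`. -/
abbrev E4 : Type := Fin 4 → ℂ

/-- The model hypersurface `Q = {Im w = 2 Re (z₁ ζ̄) + 2 Re (z₂ ζ̄²)} ⊆ ℂ⁴`. -/
def Q : Set E4 :=
  {p | (p 3).im = 2 * (p 0 * conj (p 2)).re + 2 * (p 1 * (conj (p 2)) ^ 2).re}

/-- The 4-tuple `(f, g, h, e)` is tangent to `Q` on `U`. -/
def TangentOn (f g h e : E4 → ℂ) (U : Set E4) : Prop :=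
  ∀ p ∈ Q ∩ U,
    (e p).im = 2 * (f p * conj (p 2) + g p * (conj (p 2)) ^ 2
      + h p * (conj (p 0) + 2 * conj (p 1) * p 2)).re

/-- Parameters `d, κ, l, n ∈ ℝ`, `a, b, c, m, M, N ∈ ℂ` of an infinitesimal
automorphism of `Q`. -/
structure Params where
  d : ℝ
  κ : ℝ
  l : ℝ
  n : ℝ
  a : ℂ
  b : ℂ
  c : ℂ
  m : ℂ
  M : ℂ
  N : ℂ

/-- The `z₁`-component of the model infinitesimal automorphism. -/
def mF (P : Params) (p : E4) : ℂ :=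
  P.a - 2 * conj P.c * p 1 + I * (P.κ : ℂ) * p 2 + P.M * p 0 + P.m * (p 2) ^ 2
    + 2 * I * conj P.N * p 0 * p 2 + P.N * p 3

/-- The `z₂`-component of the model infinitesimal automorphism. -/
def mG (P : Params) (p : E4) : ℂ :=
  P.b + (2 * P.M - 3 * (P.l : ℂ)) * p 1 - conj P.m * p 2 + 2 * I * conj P.N * p 1 * p 2
    - I * P.N * p 0 + I * (P.n : ℂ) * (p 2) ^ 2

/-- The `ζ`-component of the model infinitesimal automorphism. -/
def mH (P : Params) (p : E4) : ℂ :=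
  P.c + (3 * (P.l : ℂ) - conj P.M) * p 2 + I * conj P.N * (p 2) ^ 2

/-- The `w`-component of the model infinitesimal automorphism. -/
def mE (P : Params) (p : E4) : ℂ :=
  (P.d : ℂ) + 2 * I * conj P.a * p 2 + 2 * I * conj P.c * p 0 + 2 * I * conj P.b * (p 2) ^ 2
    + 3 * (P.l : ℂ) * p 3 + 2 * I * conj P.N * p 2 * p 3

/-- Germs at `0 ∈ ℂ⁴` of complex-valued functions. -/
abbrev G4 : Type := Filter.Germ (𝓝 (0 : E4)) ℂ

/-- Germs at `0` of holomorphic 4-tuples tangent to `Q` near `0`. -/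
def tangentGerms : Set (G4 × G4 × G4 × G4) :=
  {t | ∃ f g h e : E4 → ℂ, t = (↑f, ↑g, ↑h, ↑e) ∧
    ∃ V : Set E4, IsOpen V ∧ (0 : E4) ∈ V ∧
      DifferentiableOn ℂ f V ∧ DifferentiableOn ℂ g V ∧
      DifferentiableOn ℂ h V ∧ DifferentiableOn ℂ e V ∧
      TangentOn f g h e V}


def Polar (J : ℂ) (r : ℝ) (f g h e fb gb hb eb : ℂ → ℂ → ℂ → ℂ → ℂ) : Prop :=
  ∀ z1 z2 ζ χ1 χ2 η s w ω : ℂ, ‖z1‖ < r → ‖z2‖ < r → ‖ζ‖ < r → ‖χ1‖ < r → ‖χ2‖ < r →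
    ‖η‖ < r → ‖s‖ < r → w = s + J * (z1 * η + z2 * η ^ 2) → ω = s - J * (χ1 * ζ + χ2 * ζ ^ 2) →
    e z1 z2 ζ w - eb χ1 χ2 η ω = J * (f z1 z2 ζ w * η + g z1 z2 ζ w * η ^ 2
      + h z1 z2 ζ w * (χ1 + 2 * χ2 * ζ) + fb χ1 χ2 η ω * ζ + gb χ1 χ2 η ω * ζ ^ 2
      + hb χ1 χ2 η ω * (z1 + 2 * z2 * η))

lemma Polar.swap {J : ℂ} {r : ℝ} {f g h e fb gb hb eb : ℂ → ℂ → ℂ → ℂ → ℂ}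
    (H : Polar J r f g h e fb gb hb eb) : Polar (-J) r fb gb hb eb f g h e := by
  intro z1 z2 ζ χ1 χ2 η s w ω h1 h2 h3 h4 h5 h6 h7 hw hω
  have := H χ1 χ2 η z1 z2 ζ s ω w h4 h5 h6 h1 h2 h3 h7 (by rw [hω]; ring) (by rw [hw]; ring)
  linear_combination -this

lemma Polar.mono {J : ℂ} {r r' : ℝ} {f g h e fb gb hb eb : ℂ → ℂ → ℂ → ℂ → ℂ}
    (H : Polar J r f g h e fb gb hb eb) (hr : r' ≤ r) : Polar J r' f g h e fb gb hb eb := by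
  intro z1 z2 ζ χ1 χ2 η s w ω h1 h2 h3 h4 h5 h6 h7 hw hω
  exact H z1 z2 ζ χ1 χ2 η s w ω (by linarith) (by linarith) (by linarith) (by linarith)
    (by linarith) (by linarith) (by linarith) hw hω

lemma star_mixed {J : ℂ} {r : ℝ} {f g h e fb gb hb eb : ℂ → ℂ → ℂ → ℂ → ℂ}
    (hJ : J ≠ 0) (hr : 0 < r) (H : Polar J r f g h e fb gb hb eb)
    (z1 z2 ζ χ1 χ2 η s w ω : ℂ) (h1 : ‖z1‖ < r) (h2 : ‖z2‖ < r) (h3 : ‖ζ‖ < r) (h4 : ‖χ1‖ < r)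
    (h5 : ‖χ2‖ < r) (h6 : ‖η‖ < r) (h7 : ‖s‖ < r) (hw : w = s + J * (z1 * η + z2 * η ^ 2))
    (hω : ω = s - J * (χ1 * ζ + χ2 * ζ ^ 2)) :
    (h z1 z2 ζ w - h 0 0 ζ s) * (χ1 + 2 * χ2 * ζ)
      + (hb χ1 χ2 η ω - hb 0 0 η s) * (z1 + 2 * z2 * η) = 0 := by
  have n0 : ‖(0 : ℂ)‖ < r := by simpa using hr
  have S1 := H z1 z2 ζ χ1 χ2 η s w ω h1 h2 h3 h4 h5 h6 h7 hw hω
  have S2 := H z1 z2 ζ 0 0 η s w s h1 h2 h3 n0 n0 h6 h7 hw (by ring)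
  have S3 := H 0 0 ζ χ1 χ2 η s s ω n0 n0 h3 h4 h5 h6 h7 (by ring) hω
  have S4 := H 0 0 ζ 0 0 η s s s n0 n0 h3 n0 n0 h6 h7 (by ring) (by ring)
  apply mul_left_cancel₀ hJ
  linear_combination -S1 + S2 + S3 - S4

lemma norm_q {J a b η : ℂ} {δ : ℝ} (hJ2 : ‖J‖ = 2) (ha : ‖a‖ < δ) (hb : ‖b‖ < δ) (he : ‖η‖ < δ)
    (hδ : δ ≤ 1) : ‖J * (a * η + b * η ^ 2)‖ < 4 * δ := by
  have h0 : 0 < δ := (norm_nonneg _).trans_lt ha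
  have h1 : ‖a * η‖ < δ := by
    rw [norm_mul]
    have := mul_le_mul ha.le (he.le.trans hδ) (norm_nonneg _) h0.le
    rcases eq_or_lt_of_le (norm_nonneg a) with h | h
    · rw [← h]; simpa using h0
    · nlinarith [norm_nonneg η]
  have h2 : ‖b * η ^ 2‖ < δ := by
    rw [norm_mul, norm_pow]
    have : ‖η‖ ^ 2 ≤ 1 := pow_le_one₀ (norm_nonneg _) (he.le.trans hδ)
    nlinarith [norm_nonneg b]
  rw [norm_mul, hJ2]
  have := norm_add_le (a * η) (b * η ^ 2)
  linarith

lemma step1 {J : ℂ} {r : ℝ} {f g h e fb gb hb eb : ℂ → ℂ → ℂ → ℂ → ℂ}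
    (hJ : ‖J‖ = 2) (hr : 0 < r) (hr1 : r ≤ 1) (H : Polar J r f g h e fb gb hb eb) :
    ∃ r' > 0, r' ≤ r ∧ ∀ z1 z2 ζ w : ℂ, ‖z1‖ < r' → ‖z2‖ < r' → ‖ζ‖ < r' → ‖w‖ < r' →
      h z1 z2 ζ w = h 0 0 ζ 0 := by
  have hJ0 : J ≠ 0 := by intro h0; simp [h0] at hJ
  have n0 : ‖(0 : ℂ)‖ < r := by simpa using hr
  have hrr : ‖((r / 2 : ℝ) : ℂ)‖ < r := by
    rw [Complex.norm_real, Real.norm_of_nonneg (by linarith)]; linarith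
  set x : ℂ := ((r / 2 : ℝ) : ℂ) with hx
  have hx0 : x ≠ 0 := by rw [hx]; exact_mod_cast (by linarith : r / 2 ≠ 0)
  -- kill
  have A : ∀ ζ s y η : ℂ, ‖ζ‖ < r → ‖s‖ < r → ‖y‖ < r / 2 → ‖η‖ < r →
      h (-2 * y * η) y ζ (s - J * (y * η ^ 2)) = h 0 0 ζ s := by
    intro ζ s y η hζ hs hy hη
    have hyη : ‖-2 * y * η‖ < r := by
      rw [norm_mul, norm_mul]; simp
      nlinarith [norm_nonneg y, norm_nonneg η]
    have := star_mixed hJ0 hr H (-2 * y * η) y ζ x 0 η s (s - J * (y * η ^ 2)) _ hyη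
      (by linarith) hζ hrr n0 hη hs (by ring) rfl
    have h2 : (h (-2 * y * η) y ζ (s - J * (y * η ^ 2)) - h 0 0 ζ s) * x = 0 := by
      linear_combination this
    exact sub_eq_zero.1 ((mul_eq_zero.1 h2).resolve_right hx0)
  have B : ∃ B : ℂ → ℂ → ℂ, ∀ z1 z2 ζ w : ℂ, ‖z1‖ < r → ‖z2‖ < r → ‖ζ‖ < r → ‖w‖ < r →
      h z1 z2 ζ w = h 0 0 ζ w + z1 * B ζ w := by
    refine ⟨fun ζ w => -(hb x 0 0 (w - J * (x * ζ)) - hb 0 0 0 w) / x, ?_⟩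
    intro z1 z2 ζ w h1 h2 h3 h4
    have := star_mixed hJ0 hr H z1 z2 ζ x 0 0 w w (w - J * (x * ζ)) h1 h2 h3 hrr n0 n0 h4
      (by ring) (by ring)
    beta_reduce
    generalize hb x 0 0 (w - J * (x * ζ)) = Y at this ⊢
    field_simp
    linear_combination this
  obtain ⟨B, hB⟩ := B
  have hxx : ‖x‖ = r / 2 := by
    rw [hx, Complex.norm_real, Real.norm_of_nonneg (by linarith)]
  -- combine: for all small
  have Cc : ∀ ζ w y : ℂ, ‖ζ‖ < r → ‖w‖ < r / 2 → ‖y‖ < r / 4 →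
      h 0 0 ζ w = h 0 0 ζ (w + J * (y * x ^ 2)) ∧ y * B ζ w = 0 := by
    intro ζ w y hζ hw hy
    have hyx : ‖J * (y * x ^ 2)‖ ≤ r / 2 := by
      rw [norm_mul, norm_mul, norm_pow, hJ, hxx]
      have : (r / 2) ^ 2 ≤ 1 := by nlinarith
      nlinarith [norm_nonneg y]
    have hs : ‖w + J * (y * x ^ 2)‖ < r := by
      have := norm_add_le w (J * (y * x ^ 2)); linarith
    have a1 := A ζ (w + J * (y * x ^ 2)) y x hζ hs (by linarith) hrr
    have a2 := A ζ (w + J * (y * x ^ 2)) y (-x) hζ hs (by linarith) (by simpa using hrr)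
    have e1 : w + J * (y * x ^ 2) - J * (y * x ^ 2) = w := by ring
    have e2 : w + J * (y * x ^ 2) - J * (y * (-x) ^ 2) = w := by ring
    rw [e1] at a1
    rw [e2] at a2
    have hyη : ‖-2 * y * x‖ < r := by
      rw [norm_mul, norm_mul, hxx]; simp
      nlinarith [norm_nonneg y]
    have hyη' : ‖-2 * y * -x‖ < r := by
      rw [mul_neg, norm_neg]; exact hyη
    rw [hB _ _ _ _ hyη (by linarith) hζ (by linarith)] at a1
    rw [hB _ _ _ _ hyη' (by linarith) hζ (by linarith)] at a2
    have : x * (y * B ζ w) = 0 := by linear_combination (a2 - a1) / 4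
    have h0 := (mul_eq_zero.1 this).resolve_left hx0
    refine ⟨?_, h0⟩
    linear_combination a1 + 2 * x * h0
  refine ⟨r ^ 3 / 16, by positivity, by nlinarith [sq_nonneg r], ?_⟩
  have hr3 : r ^ 3 / 16 ≤ r / 16 := by
    have : r ^ 3 ≤ r := by nlinarith [sq_nonneg r, mul_pos hr hr]
    linarith
  intro z1 z2 ζ w h1 h2 h3 h4
  have k1 := (Cc ζ w ((r / 8 : ℝ) : ℂ) (by linarith) (by linarith)
    (by rw [Complex.norm_real, Real.norm_of_nonneg (by linarith)]; linarith)).2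
  have hB0 : B ζ w = 0 := by
    refine (mul_eq_zero.1 k1).resolve_left ?_
    exact_mod_cast (by linarith : r / 8 ≠ 0)
  have k2 := (Cc ζ w (-w / (J * x ^ 2)) (by linarith) (by linarith) (by
    rw [norm_div, norm_neg, norm_mul, norm_pow, hJ, hxx]
    rw [div_lt_iff₀ (by positivity)]
    nlinarith [mul_pos hr hr, mul_pos hr (mul_pos hr hr)])).1
  rw [hB _ _ _ _ (by linarith) (by linarith) (by linarith) (by linarith), hB0, k2]
  have : w + J * (-w / (J * x ^ 2) * x ^ 2) = 0 := by field_simp; ring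
  rw [this]; ring


lemma const_at_zero {φ : ℂ → ℂ} {c : ℂ} {r : ℝ} (hr : 0 < r) (hφ : ContinuousAt φ 0)
    (h : ∀ x, x ≠ 0 → ‖x‖ < r → φ x = c) : φ 0 = c := by
  have h1 : Tendsto φ (𝓝[≠] 0) (𝓝 (φ 0)) := hφ.tendsto.mono_left nhdsWithin_le_nhds
  have h2 : Tendsto φ (𝓝[≠] 0) (𝓝 c) := by
    refine tendsto_const_nhds.congr' ?_
    have : ∀ᶠ x in 𝓝[≠] (0 : ℂ), ‖x‖ < r := by
      apply eventually_nhdsWithin_of_eventually_nhds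
      have := Metric.ball_mem_nhds (0 : ℂ) hr
      filter_upwards [this] with x hx
      simpa using hx
    filter_upwards [this, self_mem_nhdsWithin] with x hx hx0
    exact (h x hx0 hx).symm
  exact tendsto_nhds_unique h1 h2

lemma exists_div_small {r : ℝ} {k : ℂ} (hk : k ≠ 0) (hr : 0 < r) :
    ∃ r' > 0, r' ≤ r ∧ ∀ x : ℂ, ‖x‖ < r' → ∃ z, ‖z‖ < r ∧ x = k * z := by
  have hk' : 0 < ‖k‖ := norm_pos_iff.2 hk
  refine ⟨min r (r * ‖k‖), by positivity, min_le_left _ _, fun x hx => ⟨x / k, ?_, by field_simp⟩⟩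
  rw [norm_div, div_lt_iff₀ hk']
  exact hx.trans_le (min_le_right _ _)

lemma core {J : ℂ} {r : ℝ} (hJ : ‖J‖ = 2) (hr : 0 < r) (hr1 : r ≤ 1)
    {E F G K : ℂ → ℂ} {U V : ℂ → ℂ → ℂ → ℂ} (hE : DifferentiableAt ℂ E 0)
    (hK : DifferentiableAt ℂ K 0)
    (H : ∀ z1 z2 η s w : ℂ, ‖z1‖ < r → ‖z2‖ < r → ‖η‖ < r → ‖s‖ < r →
      w = s + J * (z1 * η + z2 * η ^ 2) →
      E w + J * K 0 * z1 - (E s - J * (F s * η + G s * η ^ 2)) =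
        J * (U z1 z2 w * η + V z1 z2 w * η ^ 2 + K η * (z1 + 2 * z2 * η))) :
    ∃ r' > 0, r' ≤ r ∧ ∃ N L lam : ℂ, ∀ x : ℂ, ‖x‖ < r' →
      F x = F 0 + N * x ∧ G x = G 0 ∧ E x = E 0 + lam * x ∧
      K x = K 0 + L * x - J * N / 2 * x ^ 2 := by
  have hJ0 : J ≠ 0 := by intro h0; simp [h0] at hJ
  -- the two combined equations
  have D : ∀ z y1 y2 s w : ℂ, ‖z‖ < r → ‖y1‖ < r / 2 → ‖y2‖ < r / 2 → ‖s‖ < r → y1 ≠ y2 →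
      w = s - J * (z * (y1 * y2)) →
      (U (-z * (y1 + y2)) z w - F s) + (V (-z * (y1 + y2)) z w - G s) * (y1 + y2)
        = - z * (K y1 + K y2) ∧
      J * (V (-z * (y1 + y2)) z w - G s) * (y1 * y2) = -(E w - E s) + J * K 0 * z * (y1 + y2)
        - J * z * (y2 * K y1 + y1 * K y2) := by
    intro z y1 y2 s w hz h1 h2 hs hne hw
    have hz1 : ‖-z * (y1 + y2)‖ < r := by
      rw [norm_mul, norm_neg]
      have := norm_add_le y1 y2
      nlinarith [norm_nonneg z, norm_nonneg (y1 + y2)]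
    have e1 := H (-z * (y1 + y2)) z y1 s w hz1 hz (by linarith) hs (by rw [hw]; ring)
    have e2 := H (-z * (y1 + y2)) z y2 s w hz1 hz (by linarith) hs (by rw [hw]; ring)
    have hne' : y1 - y2 ≠ 0 := sub_ne_zero.2 hne
    constructor
    · apply mul_left_cancel₀ (mul_ne_zero hJ0 hne')
      linear_combination -e1 + e2
    · apply mul_left_cancel₀ hne'
      linear_combination -y2 * e1 + y1 * e2
  -- smallness of a moved point
  have sm : ∀ z y1 y2 s : ℂ, ‖z‖ < r / 4 → ‖y1‖ < r → ‖y2‖ < r → ‖s‖ < r / 2 →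
      ‖s + J * (z * (y1 * y2))‖ < r := by
    intro z y1 y2 s hz h1 h2 hs
    have := norm_add_le s (J * (z * (y1 * y2)))
    have h3 : ‖J * (z * (y1 * y2))‖ ≤ r / 2 := by
      rw [norm_mul, norm_mul, norm_mul, hJ]
      have : ‖y1‖ * ‖y2‖ ≤ 1 := mul_le_one₀ (by linarith) (norm_nonneg _) (by linarith)
      nlinarith [norm_nonneg z, mul_nonneg (norm_nonneg y1) (norm_nonneg y2)]
    linarith
  -- a fixed small nonzero number
  obtain ⟨y, hy0, hy⟩ : ∃ y : ℂ, y ≠ 0 ∧ ‖y‖ = r / 10 := by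
    refine ⟨((r / 10 : ℝ) : ℂ), ?_, ?_⟩
    · exact_mod_cast (by linarith : r / 10 ≠ 0)
    · rw [Complex.norm_real, Real.norm_of_nonneg (by linarith)]
  have hy2 : ‖2 * y‖ = r / 5 := by rw [norm_mul, hy]; simp; ring
  have hy3 : ‖3 * y‖ = 3 * r / 10 := by rw [norm_mul, hy]; simp; ring
  have neg_ne : ∀ x : ℂ, x ≠ 0 → x ≠ -x := fun x hx h => hx (self_eq_neg.1 h)
  -- even part equation
  have Ev : ∀ z x w : ℂ, ‖z‖ < r / 4 → x ≠ 0 → ‖x‖ < r / 2 → ‖w‖ < r / 2 →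
      U 0 z w = F (w - J * (z * x ^ 2)) - z * (K x + K (-x)) := by
    intro z x w hz hx0 hx hw
    have hs : ‖w - J * (z * x ^ 2)‖ < r := by
      have := sm z x (-x) w hz (by linarith) (by rw [norm_neg]; linarith) hw
      rwa [show w + J * (z * (x * -x)) = w - J * (z * x ^ 2) by ring] at this
    have := (D z x (-x) (w - J * (z * x ^ 2)) w (by linarith) hx (by rwa [norm_neg]) hs
      (neg_ne x hx0) (by ring)).1
    rw [add_neg_cancel, mul_zero] at this
    linear_combination this
  obtain ⟨N, r1, hr1p, hr1r, hF⟩ : ∃ N : ℂ, ∃ r1 > 0, r1 ≤ r ∧ ∀ x : ℂ, ‖x‖ < r1 →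
      F x = F 0 + N * x := by
    obtain ⟨r1, h1, h2, h3⟩ := exists_div_small (r := r / 4) (k := -(3 * J * y ^ 2))
      (by simp [hJ0, hy0]) (by linarith)
    refine ⟨((K (2 * y) + K (-(2 * y))) - (K y + K (-y))) / (-(3 * J * y ^ 2)), r1, h1,
      by linarith, ?_⟩
    intro x hx
    obtain ⟨z, hz, rfl⟩ := h3 x hx
    have hw : ‖J * (z * y ^ 2)‖ < r / 2 := by
      rw [norm_mul, norm_mul, norm_pow, hJ, hy]
      have : (r / 10) ^ 2 ≤ 1 / 2 := by nlinarith
      nlinarith [norm_nonneg z]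
    have a1 := Ev z (2 * y) (J * (z * y ^ 2)) hz (by simp [hy0]) (by linarith) hw
    have a2 := Ev z y (J * (z * y ^ 2)) hz hy0 (by linarith) hw
    rw [show J * (z * y ^ 2) - J * (z * (2 * y) ^ 2) = -(3 * J * y ^ 2) * z by ring] at a1
    rw [show J * (z * y ^ 2) - J * (z * y ^ 2) = 0 by ring] at a2
    generalize F (-(3 * J * y ^ 2) * z) = Y at a1 ⊢
    field_simp
    linear_combination a2 - a1
  obtain ⟨ρ, hρ, hρr, hρ1⟩ : ∃ ρ > 0, ρ ≤ r / 10 ∧ 10 * ρ ≤ r1 :=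
    ⟨min (r / 10) (r1 / 10), by positivity, min_le_left _ _, by
      have := min_le_right (r / 10) (r1 / 10); linarith⟩
  have smq : ∀ z x1 x2 : ℂ, ‖z‖ < ρ → ‖x1‖ < ρ → ‖x2‖ < ρ → ‖J * (z * (x1 * x2))‖ < r1 := by
    intro z x1 x2 hz h1 h2
    rw [norm_mul, norm_mul, norm_mul, hJ]
    have : ‖x1‖ * ‖x2‖ ≤ 1 := mul_le_one₀ (by linarith) (norm_nonneg _) (by linarith)
    nlinarith [norm_nonneg z, mul_nonneg (norm_nonneg x1) (norm_nonneg x2)]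
  obtain ⟨z0, hz00, hz0⟩ : ∃ z : ℂ, z ≠ 0 ∧ ‖z‖ < ρ := by
    refine ⟨((ρ / 2 : ℝ) : ℂ), ?_, ?_⟩
    · exact_mod_cast (by linarith : ρ / 2 ≠ 0)
    · rw [Complex.norm_real, Real.norm_of_nonneg (by linarith)]; linarith
  -- the even part of K
  have hKe : ∀ x : ℂ, ‖x‖ < ρ → K x + K (-x) = 2 * K 0 - J * N * x ^ 2 := by
    have key : ∀ x : ℂ, x ≠ 0 → ‖x‖ < ρ → K x + K (-x) + J * N * x ^ 2 = (F 0 - U 0 z0 0) / z0 := by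
      intro x hx0 hx
      have a := Ev z0 x 0 (by linarith) hx0 (by linarith) (by simpa using by linarith)
      have hn : ‖0 - J * (z0 * x ^ 2)‖ < r1 := by
        rw [zero_sub, norm_neg, pow_two]; exact smq _ _ _ hz0 hx hx
      rw [hF _ hn] at a
      field_simp
      linear_combination a
    have cK : ContinuousAt (fun x => K x + K (-x) + J * N * x ^ 2) 0 := by
      have h1 : ContinuousAt K 0 := hK.continuousAt
      have h2 : ContinuousAt (fun x => K (-x)) 0 := by
        apply ContinuousAt.comp (g := K) (f := fun x : ℂ => -x)
        · simpa using h1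
        · fun_prop
      exact (h1.add h2).add (by fun_prop)
    have hc := const_at_zero hρ cK key
    simp only [neg_zero] at hc
    intro x hx
    rcases eq_or_ne x 0 with rfl | hx0
    · simp; ring
    · linear_combination key x hx0 hx - hc
  -- odd part
  obtain ⟨o, ho⟩ : ∃ o : ℂ → ℂ, ∀ x, o x = K x - K 0 + J * N / 2 * x ^ 2 := ⟨_, fun _ => rfl⟩
  have ho0 : o 0 = 0 := by rw [ho]; ring
  have hoK : ∀ x, K x = K 0 - J * N / 2 * x ^ 2 + o x := fun x => by rw [ho]; ring
  have oodd : ∀ x, ‖x‖ < ρ → o (-x) = - o x := by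
    intro x hx
    have := hKe x hx
    rw [ho, ho]
    linear_combination this
  have odiff : DifferentiableAt ℂ o 0 := by
    have : o = fun x => K x - K 0 + J * N / 2 * x ^ 2 := funext ho
    rw [this]
    fun_prop
  -- Cauchy type equation
  have Ca : ∀ z y1 y2 : ℂ, ‖z‖ < ρ → ‖y1‖ < ρ → ‖y2‖ < ρ → y1 ≠ y2 → y1 + y2 ≠ 0 →
      (y1 + y2) * (G (J * (z * (y1 * y2))) - G 0) = z * (o y1 + o y2 - o (y1 + y2)) := by
    intro z y1 y2 hz h1 h2 hne hne0
    have hs := smq z y1 y2 hz h1 h2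
    have n12 : ‖y1 + y2‖ < r / 2 := by have := norm_add_le y1 y2; linarith
    have a1 := (D z y1 y2 (J * (z * (y1 * y2))) 0 (by linarith) (by linarith) (by linarith)
      (by linarith) hne (by ring)).1
    have a2 := (D z (y1 + y2) 0 0 0 (by linarith) n12 (by simpa using by linarith)
      (by simpa using hr) hne0 (by ring)).1
    rw [hF _ hs] at a1
    rw [add_zero] at a2
    rw [hoK y1, hoK y2] at a1
    rw [hoK (y1 + y2)] at a2
    linear_combination a2 - a1
  obtain ⟨y, hy0, hy⟩ : ∃ y : ℂ, y ≠ 0 ∧ ‖y‖ = ρ / 10 := by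
    refine ⟨((ρ / 10 : ℝ) : ℂ), ?_, ?_⟩
    · exact_mod_cast (by linarith : ρ / 10 ≠ 0)
    · rw [Complex.norm_real, Real.norm_of_nonneg (by linarith)]
  have hy2 : ‖2 * y‖ = ρ / 5 := by rw [norm_mul, hy]; simp; ring
  have hy3 : ‖3 * y‖ = 3 * ρ / 10 := by rw [norm_mul, hy]; simp; ring
  have y2ne : 2 * y ≠ y := fun h => hy0 (by linear_combination h)
  have y3ne : 2 * y + y ≠ 0 := fun h => hy0 (by linear_combination h / 3)
  obtain ⟨b1, r2, hr2p, hr2r, hG⟩ : ∃ b1 : ℂ, ∃ r2 > 0, r2 ≤ r ∧ ∀ x : ℂ, ‖x‖ < r2 →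
      G x = G 0 + b1 * x := by
    obtain ⟨r2, h1, h2, h3⟩ := exists_div_small (r := ρ) (k := J * (2 * y ^ 2))
      (by simp [hJ0, hy0]) hρ
    refine ⟨(o (2 * y) + o y - o (2 * y + y)) / (3 * y * (J * (2 * y ^ 2))), r2, h1,
      by linarith, ?_⟩
    intro x hx
    obtain ⟨z, hz, rfl⟩ := h3 x hx
    have a1 := Ca z (2 * y) y hz (by linarith) (by linarith) y2ne y3ne
    rw [show J * (z * (2 * y * y)) = J * (2 * y ^ 2) * z by ring] at a1
    generalize G (J * (2 * y ^ 2) * z) = Y at a1 ⊢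
    generalize o (2 * y + y) = Y2 at a1 ⊢
    field_simp
    linear_combination a1
  obtain ⟨τ, hτ, hτρ, hτ2⟩ : ∃ τ > 0, τ ≤ ρ ∧ 10 * τ ≤ r2 :=
    ⟨min ρ (r2 / 10), by positivity, min_le_left _ _, by
      have := min_le_right ρ (r2 / 10); linarith⟩
  have smq2 : ∀ z x1 x2 : ℂ, ‖z‖ < τ → ‖x1‖ < τ → ‖x2‖ < τ → ‖J * (z * (x1 * x2))‖ < r2 := by
    intro z x1 x2 hz h1 h2
    rw [norm_mul, norm_mul, norm_mul, hJ]
    have : ‖x1‖ * ‖x2‖ ≤ 1 := mul_le_one₀ (by linarith) (norm_nonneg _) (by linarith)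
    nlinarith [norm_nonneg z, mul_nonneg (norm_nonneg x1) (norm_nonneg x2)]
  -- slopes
  obtain ⟨S, hS, cS⟩ : ∃ S : ℂ → ℂ, (∀ x, E x = E 0 + x * S x) ∧ ContinuousAt S 0 := by
    refine ⟨dslope E 0, fun x => ?_, continuousAt_dslope_same.2 hE⟩
    have := sub_smul_dslope E 0 x
    simp only [sub_zero, smul_eq_mul] at this
    rw [this]; ring
  obtain ⟨θ, hθ, cθ⟩ : ∃ θ : ℂ → ℂ, (∀ x, o x = x * θ x) ∧ ContinuousAt θ 0 := by
    refine ⟨dslope o 0, fun x => ?_, continuousAt_dslope_same.2 odiff⟩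
    have := sub_smul_dslope o 0 x
    simp only [sub_zero, smul_eq_mul] at this
    rw [this, ho0]; ring
  have Vz : ∀ z x : ℂ, ‖z‖ < τ → x ≠ 0 → ‖x‖ < τ →
      G 0 - b1 * J * z * x ^ 2 + z * S (-(J * z * x ^ 2)) - 2 * z * θ x = V 0 z 0 := by
    intro z x hz hx0 hx
    have hs : ‖-(J * z * x ^ 2)‖ < r2 := by
      rw [norm_neg, show J * z * x ^ 2 = J * (z * (x * x)) by ring]
      exact smq2 _ _ _ hz hx hx
    have a := (D z x (-x) (-(J * z * x ^ 2)) 0 (by linarith) (by linarith)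
      (by rw [norm_neg]; linarith) (by linarith) (neg_ne x hx0) (by ring)).2
    rw [add_neg_cancel, mul_zero, hG _ hs, hS (-(J * z * x ^ 2)), hoK x, hoK (-x),
      oodd x (by linarith), hθ x] at a
    have : J * x ^ 2 ≠ 0 := by simp [hJ0, hx0]
    apply mul_left_cancel₀ this
    linear_combination a
  have Vlim : ∀ z : ℂ, ‖z‖ < τ → V 0 z 0 = G 0 + z * S 0 - 2 * z * θ 0 := by
    intro z hz
    have c : ContinuousAt (fun x : ℂ => G 0 - b1 * J * z * x ^ 2 + z * S (-(J * z * x ^ 2))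
        - 2 * z * θ x) 0 := by
      have h2 : ContinuousAt (fun x : ℂ => S (-(J * z * x ^ 2))) 0 := by
        apply ContinuousAt.comp (g := S) (f := fun x : ℂ => -(J * z * x ^ 2))
        · simpa using cS
        · fun_prop
      have h3 : ContinuousAt (fun x : ℂ => G 0 - b1 * J * z * x ^ 2) 0 := by fun_prop
      exact (h3.add (continuousAt_const.mul h2)).sub (continuousAt_const.mul cθ)
    have := const_at_zero hτ c (fun x hx0 hx => Vz z x hz hx0 hx)
    simp at this
    exact this.symm
  have Sz : ∀ z x : ℂ, z ≠ 0 → ‖z‖ < τ → x ≠ 0 → ‖x‖ < τ →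
      S (-(J * z * x ^ 2)) = S 0 - 2 * θ 0 + b1 * J * x ^ 2 + 2 * θ x := by
    intro z x hz0 hz hx0 hx
    apply mul_left_cancel₀ hz0
    linear_combination Vz z x hz hx0 hx + Vlim z hz
  have Th : ∀ x : ℂ, ‖x‖ < τ → θ x = θ 0 - b1 * J / 2 * x ^ 2 := by
    intro x hx
    rcases eq_or_ne x 0 with rfl | hx0
    · ring
    have c : ContinuousAt (fun z : ℂ => S (-(J * z * x ^ 2))) 0 := by
      apply ContinuousAt.comp (g := S) (f := fun z : ℂ => -(J * z * x ^ 2))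
      · simpa using cS
      · fun_prop
    have := const_at_zero hτ c (fun z hz0 hz => Sz z x hz0 hz hx0 hx)
    simp at this
    linear_combination -this / 2
  obtain ⟨y, hy0, hy⟩ : ∃ y : ℂ, y ≠ 0 ∧ ‖y‖ = τ / 10 := by
    refine ⟨((τ / 10 : ℝ) : ℂ), ?_, ?_⟩
    · exact_mod_cast (by linarith : τ / 10 ≠ 0)
    · rw [Complex.norm_real, Real.norm_of_nonneg (by linarith)]
  have hy2 : ‖2 * y‖ = τ / 5 := by rw [norm_mul, hy]; simp; ring
  have hy3 : ‖2 * y + y‖ = 3 * τ / 10 := by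
    rw [show 2 * y + y = 3 * y by ring, norm_mul, hy]; simp; ring
  have y2ne : 2 * y ≠ y := fun h => hy0 (by linear_combination h)
  have y3ne : 2 * y + y ≠ 0 := fun h => hy0 (by linear_combination h / 3)
  have hb1 : b1 = 0 := by
    have a := Ca y (2 * y) y (by linarith) (by linarith) (by linarith) y2ne y3ne
    rw [hG _ (smq2 _ _ _ (by linarith) (by linarith) (by linarith)), hθ (2 * y), hθ y,
      hθ (2 * y + y), Th (2 * y) (by linarith), Th y (by linarith),
      Th (2 * y + y) (by linarith)] at a
    have h2 : J * y ^ 4 ≠ 0 := by simp [hJ0, hy0]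
    apply mul_left_cancel₀ h2
    linear_combination -a / 3
  subst hb1
  obtain ⟨r3, h31, h32, h33⟩ := exists_div_small (r := τ) (k := -(J * y ^ 2))
      (by simp [hJ0, hy0]) hτ
  refine ⟨min r3 τ, by positivity, by have := min_le_left r3 τ; linarith, N, θ 0, S 0, ?_⟩
  intro x hx
  have hx3 : ‖x‖ < r3 := hx.trans_le (min_le_left _ _)
  have hxt : ‖x‖ < τ := hx.trans_le (min_le_right _ _)
  refine ⟨hF x (by linarith), ?_, ?_, ?_⟩
  · rw [hG x (by linarith)]; ring
  · obtain ⟨z, hz, hxz⟩ := h33 x hx3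
    rcases eq_or_ne z 0 with rfl | hz0
    · rw [hxz]; simp
    · have := Sz z y hz0 hz hy0 (by linarith)
      rw [Th y (by linarith), show -(J * z * y ^ 2) = x by rw [hxz]; ring] at this
      rw [hS x, this]; ring
  · rw [hoK x, hθ x, Th x hxt]; ring


lemma hom {J : ℂ} {r : ℝ} {f g fb gb : ℂ → ℂ → ℂ → ℂ → ℂ}
    (hJ : ‖J‖ = 2) (hr : 0 < r) (hr1 : r ≤ 1)
    (H : ∀ z1 z2 ζ χ1 χ2 η s w ω : ℂ, ‖z1‖ < r → ‖z2‖ < r → ‖ζ‖ < r → ‖χ1‖ < r → ‖χ2‖ < r →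
      ‖η‖ < r → ‖s‖ < r → w = s + J * (z1 * η + z2 * η ^ 2) →
      ω = s - J * (χ1 * ζ + χ2 * ζ ^ 2) →
      f z1 z2 ζ w * η + g z1 z2 ζ w * η ^ 2 + fb χ1 χ2 η ω * ζ + gb χ1 χ2 η ω * ζ ^ 2 = 0) :
    ∃ r' > 0, r' ≤ r ∧ ∃ p q u v : ℂ, (∀ z1 z2 ζ w : ℂ, ‖z1‖ < r' → ‖z2‖ < r' → ‖ζ‖ < r' →
      ‖w‖ < r' → f z1 z2 ζ w = p * ζ + q * ζ ^ 2 ∧ g z1 z2 ζ w = u * ζ + v * ζ ^ 2) ∧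
      ∀ η : ℂ, ‖η‖ < r' → fb 0 0 η 0 = -p * η - u * η ^ 2 ∧ gb 0 0 η 0 = -q * η - v * η ^ 2 := by
  have hJ0 : J ≠ 0 := by intro h0; simp [h0] at hJ
  have n0 : ‖(0 : ℂ)‖ < r := by simpa using hr
  obtain ⟨x, hx0, hx⟩ : ∃ y : ℂ, y ≠ 0 ∧ ‖y‖ = r / 4 := by
    refine ⟨((r / 4 : ℝ) : ℂ), ?_, ?_⟩
    · exact_mod_cast (by linarith : r / 4 ≠ 0)
    · rw [Complex.norm_real, Real.norm_of_nonneg (by linarith)]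
  have hnx : ‖-x‖ < r := by rw [norm_neg]; linarith
  have FG : ∀ ζ η s : ℂ, ‖ζ‖ < r → ‖η‖ < r → ‖s‖ < r →
      f 0 0 ζ s * η + g 0 0 ζ s * η ^ 2 + fb 0 0 η s * ζ + gb 0 0 η s * ζ ^ 2 = 0 :=
    fun ζ η s h1 h2 h3 => H 0 0 ζ 0 0 η s s s n0 n0 h1 n0 n0 h2 h3 (by ring) (by ring)
  obtain ⟨p, q, u, v, hf, hg⟩ : ∃ p q u v : ℂ → ℂ,
      (∀ ζ s, ‖ζ‖ < r → ‖s‖ < r → f 0 0 ζ s = p s * ζ + q s * ζ ^ 2) ∧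
      (∀ ζ s, ‖ζ‖ < r → ‖s‖ < r → g 0 0 ζ s = u s * ζ + v s * ζ ^ 2) := by
    refine ⟨fun s => -(fb 0 0 x s - fb 0 0 (-x) s) / (2 * x),
      fun s => -(gb 0 0 x s - gb 0 0 (-x) s) / (2 * x),
      fun s => -(fb 0 0 x s + fb 0 0 (-x) s) / (2 * x ^ 2),
      fun s => -(gb 0 0 x s + gb 0 0 (-x) s) / (2 * x ^ 2), ?_, ?_⟩
    · intro ζ s h1 h2
      have a1 := FG ζ x s h1 (by linarith) h2
      have a2 := FG ζ (-x) s h1 hnx h2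
      beta_reduce
      generalize fb 0 0 (-x) s = Y at *
      generalize gb 0 0 (-x) s = Y at *
      field_simp
      linear_combination a1 - a2
    · intro ζ s h1 h2
      have a1 := FG ζ x s h1 (by linarith) h2
      have a2 := FG ζ (-x) s h1 hnx h2
      beta_reduce
      generalize fb 0 0 (-x) s = Y at *
      generalize gb 0 0 (-x) s = Y at *
      field_simp
      linear_combination a1 + a2
  have hfgb : ∀ η s, ‖η‖ < r → ‖s‖ < r → fb 0 0 η s = -p s * η - u s * η ^ 2 ∧
      gb 0 0 η s = -q s * η - v s * η ^ 2 := by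
    intro η s h1 h2
    have a1 := FG x η s (by linarith) h1 h2
    have a2 := FG (-x) η s hnx h1 h2
    rw [hf _ _ (by linarith) h2, hg _ _ (by linarith) h2] at a1
    rw [hf _ _ hnx h2, hg _ _ hnx h2] at a2
    constructor
    · apply mul_left_cancel₀ hx0
      linear_combination (a1 - a2) / 2
    · apply mul_left_cancel₀ (pow_ne_zero 2 hx0)
      linear_combination (a1 + a2) / 2
  have K : ∀ z1 z2 ζ η s w : ℂ, ‖z1‖ < r → ‖z2‖ < r → ‖ζ‖ < r → η ≠ 0 → ‖η‖ < r → ‖s‖ < r →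
      w = s + J * (z1 * η + z2 * η ^ 2) →
      f z1 z2 ζ w + g z1 z2 ζ w * η = p s * ζ + q s * ζ ^ 2 + η * (u s * ζ + v s * ζ ^ 2) := by
    intro z1 z2 ζ η s w h1 h2 h3 hη0 h4 h5 hw
    have a := H z1 z2 ζ 0 0 η s w s h1 h2 h3 n0 n0 h4 h5 hw (by ring)
    rw [(hfgb η s h4 h5).1, (hfgb η s h4 h5).2] at a
    apply mul_left_cancel₀ hη0
    linear_combination a
  have K2 : ∀ z ζ t s w : ℂ, ‖z‖ < r → ‖ζ‖ < r → t ≠ 0 → ‖t‖ < r → ‖s‖ < r →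
      w = s + J * (z * t ^ 2) →
      f 0 z ζ w = p s * ζ + q s * ζ ^ 2 ∧ g 0 z ζ w = u s * ζ + v s * ζ ^ 2 := by
    intro z ζ t s w hz hζ ht0 ht hs hw
    have a1 := K 0 z ζ t s w n0 hz hζ ht0 ht hs (by rw [hw]; ring)
    have a2 := K 0 z ζ (-t) s w n0 hz hζ (neg_ne_zero.2 ht0) (by rwa [norm_neg]) hs
      (by rw [hw]; ring)
    constructor
    · linear_combination (a1 + a2) / 2
    · apply mul_left_cancel₀ ht0
      linear_combination (a1 - a2) / 2
  obtain ⟨r1, hr1p, hr1r, hr1x⟩ := exists_div_small (r := r) (k := -(3 / 4 * (J * x ^ 2)))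
    (by simp [hJ0, hx0]) hr
  have hc : ∀ ζ s : ℂ, ‖ζ‖ < r → ‖s‖ < r1 → p s * ζ + q s * ζ ^ 2 = p 0 * ζ + q 0 * ζ ^ 2 ∧
      u s * ζ + v s * ζ ^ 2 = u 0 * ζ + v 0 * ζ ^ 2 := by
    intro ζ s hζ hs
    obtain ⟨z, hz, hsz⟩ := hr1x s hs
    have a1 := K2 z ζ x s (s + J * (z * x ^ 2)) hz hζ hx0 (by linarith) (by linarith) rfl
    have a2 := K2 z ζ (x / 2) 0 (s + J * (z * x ^ 2)) hz hζ (by simp [hx0])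
      (by rw [norm_div, hx]; simp; linarith) n0 (by rw [hsz]; ring)
    exact ⟨a1.1.symm.trans a2.1, a1.2.symm.trans a2.2⟩
  refine ⟨r1 / 10, by positivity, by linarith, p 0, q 0, u 0, v 0, ?_, ?_⟩
  · intro z1 z2 ζ w h1 h2 h3 h4
    obtain ⟨y, hy0, hy⟩ : ∃ y : ℂ, y ≠ 0 ∧ ‖y‖ < r1 / 10 := by
      refine ⟨((r1 / 20 : ℝ) : ℂ), ?_, ?_⟩
      · exact_mod_cast (by linarith : r1 / 20 ≠ 0)
      · rw [Complex.norm_real, Real.norm_of_nonneg (by linarith)]; linarith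
    have hny : ‖-y‖ < r1 / 10 := by rwa [norm_neg]
    have s1 : ‖w - J * (z1 * y + z2 * y ^ 2)‖ < r1 := by
      have := norm_sub_le w (J * (z1 * y + z2 * y ^ 2))
      have := norm_q hJ h1 h2 hy (by linarith)
      linarith
    have s2 : ‖w - J * (z1 * -y + z2 * (-y) ^ 2)‖ < r1 := by
      have := norm_sub_le w (J * (z1 * -y + z2 * (-y) ^ 2))
      have := norm_q hJ h1 h2 hny (by linarith)
      linarith
    have a1 := K z1 z2 ζ y _ w (by linarith) (by linarith) (by linarith) hy0 (by linarith)
      (s1.trans_le hr1r) (by ring)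
    have a2 := K z1 z2 ζ (-y) _ w (by linarith) (by linarith) (by linarith)
      (neg_ne_zero.2 hy0) (by linarith) (s2.trans_le hr1r) (by ring)
    rw [(hc ζ _ (by linarith) s1).1, (hc ζ _ (by linarith) s1).2] at a1
    rw [(hc ζ _ (by linarith) s2).1, (hc ζ _ (by linarith) s2).2] at a2
    constructor
    · linear_combination (a1 + a2) / 2
    · apply mul_left_cancel₀ hy0
      linear_combination (a1 - a2) / 2
  · intro η hη
    exact hfgb η 0 (by linarith) n0


def bar (f : ℂ → ℂ → ℂ → ℂ → ℂ) : ℂ → ℂ → ℂ → ℂ → ℂ :=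
  fun a b c d => conj (f (conj a) (conj b) (conj c) (conj d))

lemma two_terms {p q p' q' : ℂ} {r : ℝ} (hr : 0 < r)
    (h : ∀ x : ℂ, ‖x‖ < r → p * x + q * x ^ 2 = p' * x + q' * x ^ 2) : p = p' ∧ q = q' := by
  obtain ⟨x, hx0, hx⟩ : ∃ y : ℂ, y ≠ 0 ∧ ‖y‖ < r := by
    refine ⟨((r / 4 : ℝ) : ℂ), ?_, ?_⟩
    · exact_mod_cast (by linarith : r / 4 ≠ 0)
    · rw [Complex.norm_real, Real.norm_of_nonneg (by linarith)]; linarith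
  have a1 := h x hx
  have a2 := h (-x) (by rwa [norm_neg])
  constructor
  · apply mul_left_cancel₀ hx0
    linear_combination (a1 - a2) / 2
  · apply mul_left_cancel₀ (pow_ne_zero 2 hx0)
    linear_combination (a1 + a2) / 2

lemma local_class {r : ℝ} {f g h e : ℂ → ℂ → ℂ → ℂ → ℂ} (hr : 0 < r) (hr1 : r ≤ 1)
    (H : Polar (2 * I) r f g h e (bar f) (bar g) (bar h) (bar e))
    (de : DifferentiableAt ℂ (fun w => bar e 0 0 0 w) 0)
    (dh : DifferentiableAt ℂ (fun η => bar h 0 0 η 0) 0) :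
    ∃ r' > 0, ∃ P : Params, ∀ z1 z2 ζ w : ℂ, ‖z1‖ < r' → ‖z2‖ < r' → ‖ζ‖ < r' → ‖w‖ < r' →
      f z1 z2 ζ w = mF P ![z1, z2, ζ, w] ∧ g z1 z2 ζ w = mG P ![z1, z2, ζ, w] ∧
      h z1 z2 ζ w = mH P ![z1, z2, ζ, w] ∧ e z1 z2 ζ w = mE P ![z1, z2, ζ, w] := by
  have hJ : ‖2 * I‖ = 2 := by simp
  have hJ0 : 2 * I ≠ 0 := by simp
  obtain ⟨r1, hr1p, hr1r, hh⟩ := step1 hJ hr hr1 H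
  have hhb : ∀ z1 z2 ζ w : ℂ, ‖z1‖ < r1 → ‖z2‖ < r1 → ‖ζ‖ < r1 → ‖w‖ < r1 →
      bar h z1 z2 ζ w = bar h 0 0 ζ 0 := by
    intro z1 z2 ζ w h1 h2 h3 h4
    simp only [bar, map_zero]
    rw [hh _ _ _ _ (by simpa using h1) (by simpa using h2) (by simpa using h3) (by simpa using h4)]
  have n0 : ‖(0 : ℂ)‖ < r := by simpa using hr
  have n1 : ‖(0 : ℂ)‖ < r1 := by simpa using hr1p
  -- formula for e
  have ee : ∀ z1 z2 ζ w : ℂ, ‖z1‖ < r1 → ‖z2‖ < r1 → ‖ζ‖ < r1 → ‖w‖ < r1 →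
      e z1 z2 ζ w = bar e 0 0 0 w + 2 * I * (bar f 0 0 0 w * ζ + bar g 0 0 0 w * ζ ^ 2
        + bar h 0 0 0 0 * z1) := by
    intro z1 z2 ζ w h1 h2 h3 h4
    have a := H z1 z2 ζ 0 0 0 w w w (by linarith) (by linarith) (by linarith) n0 n0 n0
      (by linarith) (by ring) (by ring)
    rw [hhb 0 0 0 w n1 n1 n1 h4] at a
    linear_combination a
  have e00 : ∀ w : ℂ, ‖w‖ < r1 → e 0 0 0 w = bar e 0 0 0 w := by
    intro w hw
    rw [ee 0 0 0 w n1 n1 n1 hw]; ring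
  obtain ⟨r2, hr2p, hr2r, N, L, lam, hcore⟩ := core (J := 2 * I) (r := r1 / 10) hJ
    (by linarith) (by linarith) (E := fun w => bar e 0 0 0 w) (F := fun w => f 0 0 0 w)
    (G := fun w => g 0 0 0 w) (K := fun η => bar h 0 0 η 0) (U := fun z1 z2 w => f z1 z2 0 w)
    (V := fun z1 z2 w => g z1 z2 0 w) de dh (by
      intro z1 z2 η s w h1 h2 h3 h4 hw
      have hwn : ‖w‖ < r1 := by
        rw [hw]
        have := norm_add_le s (2 * I * (z1 * η + z2 * η ^ 2))
        have := norm_q hJ h1 h2 h3 (by linarith)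
        linarith
      have a := H z1 z2 0 0 0 η s w s (by linarith) (by linarith) n0 n0 n0 (by linarith)
        (by linarith) hw (by ring)
      have b := H 0 0 0 0 0 η s s s n0 n0 n0 n0 n0 (by linarith)
        (by linarith) (by ring) (by ring)
      rw [hhb 0 0 η s n1 n1 (by linarith) (by linarith)] at a b
      rw [ee z1 z2 0 w (by linarith) (by linarith) n1 hwn] at a
      rw [e00 s (by linarith)] at b
      linear_combination a - b)
  beta_reduce at hcore
  have hF : ∀ x, ‖x‖ < r2 → f 0 0 0 x = f 0 0 0 0 + N * x := fun x hx => (hcore x hx).1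
  have hG : ∀ x, ‖x‖ < r2 → g 0 0 0 x = g 0 0 0 0 := fun x hx => (hcore x hx).2.1
  have hE : ∀ x, ‖x‖ < r2 → bar e 0 0 0 x = bar e 0 0 0 0 + lam * x :=
    fun x hx => (hcore x hx).2.2.1
  have hK : ∀ x, ‖x‖ < r2 → bar h 0 0 x 0 = conj (h 0 0 0 0) + L * x - I * N * x ^ 2 := by
    intro x hx
    rw [(hcore x hx).2.2.2]
    simp only [bar, map_zero]
    ring
  clear hcore
  have dreal : conj (e 0 0 0 0) = e 0 0 0 0 := by
    have := e00 0 n1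
    simp only [bar, map_zero] at this
    exact this.symm
  have hE' : ∀ x, ‖x‖ < r2 → bar e 0 0 0 x = e 0 0 0 0 + lam * x := by
    intro x hx
    rw [hE x hx, e00 0 n1]
  have lreal : conj lam = lam := by
    have key : ∀ x : ℂ, ‖x‖ < r2 → conj lam * x + 0 * x ^ 2 = lam * x + 0 * x ^ 2 := by
      intro x hx
      have a := hE' x hx
      have hx' : ‖conj x‖ < r2 := by simpa using hx
      have b := hE' (conj x) hx'
      rw [← e00 _ (by linarith)] at b
      simp only [bar, map_zero] at a
      rw [b] at a
      simp only [map_add, map_mul, conj_conj, dreal] at a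
      linear_combination a
    exact (two_terms hr2p key).1
  set a := f 0 0 0 0 with ha
  set b := g 0 0 0 0 with hb
  set c := h 0 0 0 0 with hc
  set d := e 0 0 0 0 with hd
  have hfb : ∀ x, ‖x‖ < r2 → bar f 0 0 0 x = conj a + conj N * x := by
    intro x hx
    simp only [bar, map_zero]
    rw [hF _ (by simpa using hx)]
    simp
  have hgb : ∀ x, ‖x‖ < r2 → bar g 0 0 0 x = conj b := by
    intro x hx
    simp only [bar, map_zero]
    rw [hG _ (by simpa using hx)]
  have eE : ∀ z1 z2 ζ w : ℂ, ‖z1‖ < r2 → ‖z2‖ < r2 → ‖ζ‖ < r2 → ‖w‖ < r2 →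
      e z1 z2 ζ w = d + lam * w + 2 * I * ((conj a + conj N * w) * ζ + conj b * ζ ^ 2
        + conj c * z1) := by
    intro z1 z2 ζ w h1 h2 h3 h4
    rw [ee z1 z2 ζ w (by linarith) (by linarith) (by linarith) (by linarith), hE' w h4, hfb w h4,
      hgb w h4]
    simp only [bar, map_zero]
    rw [← hc]
  have hH : ∀ z1 z2 ζ w : ℂ, ‖z1‖ < r2 → ‖z2‖ < r2 → ‖ζ‖ < r2 → ‖w‖ < r2 →
      h z1 z2 ζ w = c + conj L * ζ + I * conj N * ζ ^ 2 := by
    intro z1 z2 ζ w h1 h2 h3 h4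
    rw [hh z1 z2 ζ w (by linarith) (by linarith) (by linarith) (by linarith)]
    have a := hK (conj ζ) (by simpa using h3)
    simp only [bar, map_zero, conj_conj] at a
    have b := congrArg conj a
    simp only [map_add, map_sub, map_mul, map_pow, conj_conj, conj_I] at b
    rw [b]; ring
  have eEb : ∀ z1 z2 ζ w : ℂ, ‖z1‖ < r2 → ‖z2‖ < r2 → ‖ζ‖ < r2 → ‖w‖ < r2 →
      bar e z1 z2 ζ w = d + lam * w - 2 * I * ((a + N * w) * ζ + b * ζ ^ 2
        + c * z1) := by
    intro z1 z2 ζ w h1 h2 h3 h4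
    simp only [bar]
    rw [eE _ _ _ _ (by simpa using h1) (by simpa using h2) (by simpa using h3) (by simpa using h4)]
    simp only [map_add, map_mul, map_pow, conj_conj, conj_I, dreal, lreal, map_ofNat]
    ring
  have hHb : ∀ z1 z2 ζ w : ℂ, ‖z1‖ < r2 → ‖z2‖ < r2 → ‖ζ‖ < r2 → ‖w‖ < r2 →
      bar h z1 z2 ζ w = conj c + L * ζ - I * N * ζ ^ 2 := by
    intro z1 z2 ζ w h1 h2 h3 h4
    simp only [bar]
    rw [hH _ _ _ _ (by simpa using h1) (by simpa using h2) (by simpa using h3) (by simpa using h4)]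
    simp only [map_add, map_mul, map_pow, conj_conj, conj_I]
    ring
  -- subtract the model
  obtain ⟨f1, hf1⟩ : ∃ f1 : ℂ → ℂ → ℂ → ℂ → ℂ, ∀ z1 z2 ζ w, f1 z1 z2 ζ w = f z1 z2 ζ w -
      (a - 2 * conj c * z2 + (lam - L) * z1 + 2 * I * conj N * z1 * ζ + N * w) :=
    ⟨_, fun _ _ _ _ => rfl⟩
  obtain ⟨g1, hg1⟩ : ∃ g1 : ℂ → ℂ → ℂ → ℂ → ℂ, ∀ z1 z2 ζ w, g1 z1 z2 ζ w = g z1 z2 ζ w -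
      (b + (lam - 2 * L) * z2 + 2 * I * conj N * z2 * ζ - I * N * z1) :=
    ⟨_, fun _ _ _ _ => rfl⟩
  have hf1b : ∀ z1 z2 ζ w, bar f1 z1 z2 ζ w = bar f z1 z2 ζ w -
      (conj a - 2 * c * z2 + (lam - conj L) * z1 - 2 * I * N * z1 * ζ + conj N * w) := by
    intro z1 z2 ζ w
    simp only [bar, hf1, map_add, map_sub, map_mul, map_pow, conj_conj, conj_I, lreal, map_ofNat]
    ring
  have hg1b : ∀ z1 z2 ζ w, bar g1 z1 z2 ζ w = bar g z1 z2 ζ w -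
      (conj b + (lam - 2 * conj L) * z2 - 2 * I * N * z2 * ζ + I * conj N * z1) := by
    intro z1 z2 ζ w
    simp only [bar, hg1, map_add, map_sub, map_mul, map_pow, conj_conj, conj_I, lreal, map_ofNat]
    ring
  obtain ⟨r3, hr3p, hr3r, p, q, u, v, hfg, hfgb⟩ := hom (J := 2 * I) (r := r2 / 10) (f := f1)
    (g := g1) (fb := bar f1) (gb := bar g1) hJ (by linarith) (by linarith) (by
      intro z1 z2 ζ χ1 χ2 η s w ω h1 h2 h3 h4 h5 h6 h7 hw hω
      have hwn : ‖w‖ < r2 := by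
        rw [hw]
        have := norm_add_le s (2 * I * (z1 * η + z2 * η ^ 2))
        have := norm_q hJ h1 h2 h6 (by linarith)
        linarith
      have hωn : ‖ω‖ < r2 := by
        rw [hω]
        have := norm_sub_le s (2 * I * (χ1 * ζ + χ2 * ζ ^ 2))
        have := norm_q hJ h4 h5 h3 (by linarith)
        linarith
      have A := H z1 z2 ζ χ1 χ2 η s w ω (by linarith) (by linarith) (by linarith) (by linarith)
        (by linarith) (by linarith) (by linarith) hw hω
      rw [eE z1 z2 ζ w (by linarith) (by linarith) (by linarith) hwn,
        eEb χ1 χ2 η ω (by linarith) (by linarith) (by linarith) hωn,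
        hH z1 z2 ζ w (by linarith) (by linarith) (by linarith) hwn,
        hHb χ1 χ2 η ω (by linarith) (by linarith) (by linarith) hωn] at A
      rw [hf1, hg1, hf1b, hg1b]
      apply mul_left_cancel₀ hJ0
      generalize f z1 z2 ζ w = f' at *
      generalize g z1 z2 ζ w = g' at *
      generalize bar f χ1 χ2 η ω = fb' at *
      generalize bar g χ1 χ2 η ω = gb' at *
      have hwω : w = ω + 2 * I * (z1 * η + z2 * η ^ 2 + χ1 * ζ + χ2 * ζ ^ 2) := by
        rw [hw, hω]; ring
      subst hwω
      linear_combination -A)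
  have n3 : ‖(0 : ℂ)‖ < r3 := by simpa using hr3p
  have R1 := two_terms (p := conj p) (q := conj q) (p' := -p) (q' := -u) hr3p (by
    intro x hx
    have A := (hfgb x hx).1
    simp only [bar, map_zero] at A
    rw [(hfg 0 0 (conj x) 0 n3 n3 (by simpa using hx) n3).1] at A
    simp only [map_add, map_mul, map_pow, conj_conj] at A
    linear_combination A)
  have R2 := two_terms (p := conj u) (q := conj v) (p' := -q) (q' := -v) hr3p (by
    intro x hx
    have A := (hfgb x hx).2
    simp only [bar, map_zero] at A
    rw [(hfg 0 0 (conj x) 0 n3 n3 (by simpa using hx) n3).2] at A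
    simp only [map_add, map_mul, map_pow, conj_conj] at A
    linear_combination A)
  have im_of : ∀ p : ℂ, conj p = -p → p = I * (p.im : ℂ) := by
    intro p hp
    have := congrArg Complex.re hp
    simp at this
    apply Complex.ext <;> simp
    linarith
  have re_of : ∀ p : ℂ, conj p = p → (p.re : ℂ) = p := fun p hp => Complex.conj_eq_iff_re.1 hp
  refine ⟨r3, hr3p, ⟨d.re, p.im, lam.re / 3, v.im, a, b, c, q, lam - L, N⟩, ?_⟩
  intro z1 z2 ζ w h1 h2 h3 h4
  have hdre := re_of d dreal
  have hlre := re_of lam lreal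
  have hpi := im_of p R1.1
  have hvi := im_of v R2.2
  have huq : u = - conj q := by rw [R1.2]; ring
  obtain ⟨A, B⟩ := hfg z1 z2 ζ w h1 h2 h3 h4
  rw [hf1] at A
  rw [hg1] at B
  refine ⟨?_, ?_, ?_, ?_⟩
  · simp [mF]
    rw [← hpi]
    linear_combination A
  · simp [mG]
    rw [← hvi, hlre]
    rw [huq] at B
    linear_combination B
  · rw [hH _ _ _ _ (by linarith) (by linarith) (by linarith) (by linarith)]
    simp [mH]
    rw [hlre, lreal]
    left
    ring
  · rw [eE _ _ _ _ (by linarith) (by linarith) (by linarith) (by linarith)]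
    simp [mE]
    rw [hlre, hdre]
    ring

lemma diff_barE {f : E4 → ℂ} {R : ℝ} (hf : DifferentiableOn ℂ f (Metric.ball 0 R)) :
    DifferentiableOn ℂ (fun p : E4 => conj (f (fun i => conj (p i)))) (Metric.ball 0 R) := by
  intro p hp
  have hp' : (star p) ∈ Metric.ball (0 : E4) R := by
    rw [mem_ball_zero_iff] at hp ⊢
    rwa [norm_star]
  have h1 : DifferentiableAt ℂ f (star p) := hf.differentiableAt (Metric.isOpen_ball.mem_nhds hp')
  have h2 := h1.star_star
  rw [star_star] at h2
  exact h2.differentiableWithinAt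

lemma diff_vec4 {a b c d : ℂ → ℂ} (ha : Differentiable ℂ a) (hb : Differentiable ℂ b)
    (hc : Differentiable ℂ c) (hd : Differentiable ℂ d) :
    Differentiable ℂ (fun t => (![a t, b t, c t, d t] : E4)) := by
  rw [differentiable_pi]
  intro i
  fin_cases i
  · exact ha
  · exact hb
  · exact hc
  · exact hd

lemma vec4_mem {a b c d : ℂ} {R : ℝ} (hR : 0 < R) (ha : ‖a‖ < R) (hb : ‖b‖ < R) (hc : ‖c‖ < R)
    (hd : ‖d‖ < R) : (![a, b, c, d] : E4) ∈ Metric.ball (0 : E4) R := by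
  rw [mem_ball_zero_iff, pi_norm_lt_iff hR]
  intro i
  fin_cases i
  · exact ha
  · exact hb
  · exact hc
  · exact hd

lemma path_bound {z x t : ℂ} {r : ℝ} (hz : ‖z‖ < r) (hx : ‖x‖ < r) (ht : ‖t‖ < 2) :
    ‖(z + conj x) / 2 - I * t * ((z - conj x) / 2)‖ ≤ 3 * r ∧
    ‖conj ((z + conj x) / 2) + I * t * conj ((z - conj x) / 2)‖ ≤ 3 * r := by
  have hu : ‖(z + conj x) / 2‖ ≤ r := by
    rw [norm_div]
    have := norm_add_le z (conj x)
    rw [RCLike.norm_conj] at this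
    norm_num
    linarith
  have hv : ‖(z - conj x) / 2‖ ≤ r := by
    rw [norm_div]
    have := norm_sub_le z (conj x)
    rw [RCLike.norm_conj] at this
    norm_num
    linarith
  have hr : 0 ≤ r := (norm_nonneg _).trans hu
  have key : ∀ y : ℂ, ‖y‖ ≤ r → ‖I * t * y‖ ≤ 2 * r := by
    intro y hy
    rw [norm_mul, norm_mul, Complex.norm_I, one_mul]
    exact mul_le_mul ht.le hy (norm_nonneg _) (by norm_num)
  constructor
  · have := norm_sub_le ((z + conj x) / 2) (I * t * ((z - conj x) / 2))
    have := key _ hv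
    linarith
  · have := norm_add_le (conj ((z + conj x) / 2)) (I * t * conj ((z - conj x) / 2))
    have := key (conj ((z - conj x) / 2)) (by rwa [RCLike.norm_conj])
    rw [RCLike.norm_conj ((z + conj x) / 2)] at *
    linarith

lemma q_bound {z1 z2 y x1 x2 k : ℂ} {r : ℝ} (hr1 : r ≤ 1 / 100) (h1 : ‖z1‖ ≤ 3 * r)
    (h2 : ‖z2‖ ≤ 3 * r) (h3 : ‖y‖ ≤ 3 * r) (h4 : ‖x1‖ ≤ 3 * r) (h5 : ‖x2‖ ≤ 3 * r)
    (h6 : ‖k‖ ≤ 3 * r) : ‖z1 * k + x1 * y + z2 * k ^ 2 + x2 * y ^ 2‖ ≤ 12 * r := by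
  have hr : 0 ≤ r := by have := (norm_nonneg _).trans h1; linarith
  have key : ∀ a b : ℂ, ‖a‖ ≤ 3 * r → ‖b‖ ≤ 3 * r → ‖a * b‖ ≤ 3 * r := by
    intro a b ha hb
    rw [norm_mul]
    calc ‖a‖ * ‖b‖ ≤ (3 * r) * 1 := mul_le_mul ha (by linarith) (norm_nonneg _) (by linarith)
      _ = 3 * r := by ring
  have a1 := key _ _ h1 h6
  have a2 := key _ _ h4 h3
  have a3 := key _ _ h2 (key _ _ h6 h6)
  have a4 := key _ _ h5 (key _ _ h3 h3)
  rw [pow_two, pow_two]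
  have b1 := norm_add_le (z1 * k + x1 * y + z2 * (k * k)) (x2 * (y * y))
  have b2 := norm_add_le (z1 * k + x1 * y) (z2 * (k * k))
  have b3 := norm_add_le (z1 * k) (x1 * y)
  linarith

lemma complexify {f g h e : E4 → ℂ} {R : ℝ} (hR : 0 < R)
    (hf : DifferentiableOn ℂ f (Metric.ball 0 R)) (hg : DifferentiableOn ℂ g (Metric.ball 0 R))
    (hh : DifferentiableOn ℂ h (Metric.ball 0 R)) (he : DifferentiableOn ℂ e (Metric.ball 0 R))
    (ht : TangentOn f g h e (Metric.ball 0 R)) {r : ℝ} (hr : r ≤ 1 / 100) (hrR : 100 * r ≤ R) :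
    Polar (2 * I) r (fun a b c d => f ![a, b, c, d]) (fun a b c d => g ![a, b, c, d])
      (fun a b c d => h ![a, b, c, d]) (fun a b c d => e ![a, b, c, d])
      (bar (fun a b c d => f ![a, b, c, d])) (bar (fun a b c d => g ![a, b, c, d]))
      (bar (fun a b c d => h ![a, b, c, d])) (bar (fun a b c d => e ![a, b, c, d])) := by
  intro z1 z2 ζ x1 x2 η s w ω h1 h2 h3 h4 h5 h6 h7 hw hω
  have hr0 : 0 < r := (norm_nonneg _).trans_lt h1
  have hfB := diff_barE hf
  have hgB := diff_barE hg
  have hhB := diff_barE hh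
  have heB := diff_barE he
  set fB : E4 → ℂ := fun p : E4 => conj (f (fun i => conj (p i))) with fBd
  set gB : E4 → ℂ := fun p : E4 => conj (g (fun i => conj (p i))) with gBd
  set hB : E4 → ℂ := fun p : E4 => conj (h (fun i => conj (p i))) with hBd
  set eB : E4 → ℂ := fun p : E4 => conj (e (fun i => conj (p i))) with eBd
  have vecconj : ∀ a b c d : ℂ, (fun i => conj ((![a, b, c, d] : E4) i)) =
      (![conj a, conj b, conj c, conj d] : E4) := by
    intro a b c d
    funext i
    fin_cases i <;> rfl
  have cv : ∀ F : E4 → ℂ, ∀ a b c d : ℂ, bar (fun a b c d => F ![a, b, c, d]) a b c d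
      = (fun p : E4 => conj (F (fun i => conj (p i)))) ![a, b, c, d] := by
    intro F a b c d
    simp only [bar, vecconj]
  rw [cv e, cv f, cv g, cv h]
  -- the path
  set Z : ℂ → ℂ → ℂ → ℂ := fun z x t => (z + conj x) / 2 - I * t * ((z - conj x) / 2) with Zd
  set X : ℂ → ℂ → ℂ → ℂ := fun z x t => conj ((z + conj x) / 2) + I * t * conj ((z - conj x) / 2)
    with Xd
  have dZ : ∀ z x, Differentiable ℂ (Z z x) := by intro z x; simp only [Zd]; fun_prop
  have dX : ∀ z x, Differentiable ℂ (X z x) := by intro z x; simp only [Xd]; fun_prop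
  set q : ℂ → ℂ := fun t => Z z1 x1 t * X ζ η t + X z1 x1 t * Z ζ η t
    + Z z2 x2 t * X ζ η t ^ 2 + X z2 x2 t * Z ζ η t ^ 2 with qd
  have dq : Differentiable ℂ q := by
    have := dZ z1 x1
    have := dZ z2 x2
    have := dZ ζ η
    have := dX z1 x1
    have := dX z2 x2
    have := dX ζ η
    simp only [qd]
    fun_prop
  set S0 : ℂ := (w + ω) / 2 with S0d
  set S : ℂ → ℂ := fun t => (S0.re : ℂ) + t * (S0.im : ℂ) with Sd
  have dS : Differentiable ℂ S := by simp only [Sd]; fun_prop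
  set A : ℂ → E4 := fun t => ![Z z1 x1 t, Z z2 x2 t, Z ζ η t, S t + I * q t] with Ad
  set B : ℂ → E4 := fun t => ![X z1 x1 t, X z2 x2 t, X ζ η t, S t - I * q t] with Bd
  have dA : Differentiable ℂ A := diff_vec4 (dZ _ _) (dZ _ _) (dZ _ _) (by fun_prop)
  have dB : Differentiable ℂ B := diff_vec4 (dX _ _) (dX _ _) (dX _ _) (by fun_prop)
  have bS0 : ‖S0‖ ≤ 13 * r := by
    have e1 : S0 = s + I * (z1 * η + (-x1) * ζ + z2 * η ^ 2 + (-x2) * ζ ^ 2) := by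
      rw [S0d, hw, hω]; ring
    have b1 := q_bound (z1 := z1) (z2 := z2) (y := ζ) (x1 := -x1) (x2 := -x2) (k := η) hr
      (by linarith) (by linarith) (by linarith) (by rw [norm_neg]; linarith)
      (by rw [norm_neg]; linarith) (by linarith)
    have b2 := norm_add_le s (I * (z1 * η + (-x1) * ζ + z2 * η ^ 2 + (-x2) * ζ ^ 2))
    rw [norm_mul, Complex.norm_I, one_mul] at b2
    rw [e1]
    linarith
  have bS : ∀ t : ℂ, ‖t‖ < 2 → ‖S t‖ ≤ 39 * r := by
    intro t htt
    have b1 := norm_add_le (S0.re : ℂ) (t * (S0.im : ℂ))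
    rw [norm_mul] at b1
    have b2 : ‖(S0.re : ℂ)‖ ≤ 13 * r := by
      rw [Complex.norm_real]; exact (Complex.abs_re_le_norm S0).trans bS0
    have b3 : ‖(S0.im : ℂ)‖ ≤ 13 * r := by
      rw [Complex.norm_real]; exact (Complex.abs_im_le_norm S0).trans bS0
    have b4 : ‖t‖ * ‖(S0.im : ℂ)‖ ≤ 2 * (13 * r) :=
      mul_le_mul htt.le b3 (norm_nonneg _) (by norm_num)
    simp only [Sd]
    linarith
  have bq : ∀ t : ℂ, ‖t‖ < 2 → ‖q t‖ ≤ 12 * r := by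
    intro t htt
    exact q_bound hr (path_bound h1 h4 htt).1 (path_bound h2 h5 htt).1 (path_bound h3 h6 htt).1
      (path_bound h1 h4 htt).2 (path_bound h2 h5 htt).2 (path_bound h3 h6 htt).2
  have mA : Set.MapsTo A (Metric.ball 0 2) (Metric.ball 0 R) := by
    intro t htt
    rw [mem_ball_zero_iff] at htt
    apply vec4_mem hR
    · exact (path_bound h1 h4 htt).1.trans_lt (by linarith)
    · exact (path_bound h2 h5 htt).1.trans_lt (by linarith)
    · exact (path_bound h3 h6 htt).1.trans_lt (by linarith)
    · have := norm_add_le (S t) (I * q t)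
      rw [norm_mul, Complex.norm_I, one_mul] at this
      have := bS t htt
      have := bq t htt
      linarith
  have mB : Set.MapsTo B (Metric.ball 0 2) (Metric.ball 0 R) := by
    intro t htt
    rw [mem_ball_zero_iff] at htt
    apply vec4_mem hR
    · exact (path_bound h1 h4 htt).2.trans_lt (by linarith)
    · exact (path_bound h2 h5 htt).2.trans_lt (by linarith)
    · exact (path_bound h3 h6 htt).2.trans_lt (by linarith)
    · have := norm_sub_le (S t) (I * q t)
      rw [norm_mul, Complex.norm_I, one_mul] at this
      have := bS t htt
      have := bq t htt
      linarith
  set φ : ℂ → ℂ := fun t => e (A t) - eB (B t) - 2 * I * (f (A t) * X ζ η t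
    + g (A t) * X ζ η t ^ 2 + h (A t) * (X z1 x1 t + 2 * X z2 x2 t * Z ζ η t)
    + fB (B t) * Z ζ η t + gB (B t) * Z ζ η t ^ 2
    + hB (B t) * (Z z1 x1 t + 2 * Z z2 x2 t * X ζ η t)) with φd
  have dφ : DifferentiableOn ℂ φ (Metric.ball 0 2) := by
    have c1 : DifferentiableOn ℂ (fun t => f (A t)) (Metric.ball 0 2) :=
      hf.comp dA.differentiableOn mA
    have c2 : DifferentiableOn ℂ (fun t => g (A t)) (Metric.ball 0 2) :=
      hg.comp dA.differentiableOn mA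
    have c3 : DifferentiableOn ℂ (fun t => h (A t)) (Metric.ball 0 2) :=
      hh.comp dA.differentiableOn mA
    have c4 : DifferentiableOn ℂ (fun t => e (A t)) (Metric.ball 0 2) :=
      he.comp dA.differentiableOn mA
    have c5 : DifferentiableOn ℂ (fun t => fB (B t)) (Metric.ball 0 2) :=
      hfB.comp dB.differentiableOn mB
    have c6 : DifferentiableOn ℂ (fun t => gB (B t)) (Metric.ball 0 2) :=
      hgB.comp dB.differentiableOn mB
    have c7 : DifferentiableOn ℂ (fun t => hB (B t)) (Metric.ball 0 2) :=
      hhB.comp dB.differentiableOn mB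
    have c8 : DifferentiableOn ℂ (fun t => eB (B t)) (Metric.ball 0 2) :=
      heB.comp dB.differentiableOn mB
    have z1d := (dZ z1 x1).differentiableOn (s := Metric.ball 0 2)
    have z2d := (dZ z2 x2).differentiableOn (s := Metric.ball 0 2)
    have z3d := (dZ ζ η).differentiableOn (s := Metric.ball 0 2)
    have x1d := (dX z1 x1).differentiableOn (s := Metric.ball 0 2)
    have x2d := (dX z2 x2).differentiableOn (s := Metric.ball 0 2)
    have x3d := (dX ζ η).differentiableOn (s := Metric.ball 0 2)
    exact (c4.sub c8).sub (((((((c1.mul x3d).add (c2.mul (x3d.pow 2))).add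
      (c3.mul (x1d.add ((x2d.const_mul 2).mul z3d)))).add (c5.mul z3d)).add
      (c6.mul (z3d.pow 2))).add (c7.mul (z1d.add ((z2d.const_mul 2).mul x3d)))).const_mul (2 * I))
  have zero_real : ∀ t : ℝ, |t| < 2 → φ (t : ℂ) = 0 := by
    intro t htt
    have htn : (t : ℂ) ∈ Metric.ball (0 : ℂ) 2 := by
      rw [mem_ball_zero_iff, Complex.norm_real]; exact htt
    have XZ : ∀ z x, X z x t = conj (Z z x t) := by
      intro z x
      simp only [Xd, Zd, map_sub, map_mul, conj_I, conj_ofReal]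
      ring
    have ZX : ∀ z x, conj (X z x t) = Z z x t := by
      intro z x
      rw [XZ, conj_conj]
    have Sc : conj (S t) = S t := by
      simp only [Sd, map_add, map_mul, conj_ofReal]
    have qc : conj (q t) = q t := by
      simp only [qd, map_add, map_mul, map_pow, XZ, conj_conj]
      ring
    have BA : (fun i => conj (B t i)) = A t := by
      simp only [Bd, Ad, vecconj, ZX]
      rw [map_sub, map_mul, Sc, qc, conj_I]
      congr 1
      funext i
      fin_cases i <;> simp
    have mem : A t ∈ Q ∩ Metric.ball 0 R := by
      refine ⟨?_, mA htn⟩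
      have im0 : (S t).im = 0 := Complex.conj_eq_iff_im.1 Sc
      have e2 : (q t).re = 2 * (Z z1 x1 t * conj (Z ζ η t)).re
          + 2 * (Z z2 x2 t * conj (Z ζ η t) ^ 2).re := by
        have : q t = (Z z1 x1 t * conj (Z ζ η t) + conj (Z z1 x1 t * conj (Z ζ η t)))
            + (Z z2 x2 t * conj (Z ζ η t) ^ 2 + conj (Z z2 x2 t * conj (Z ζ η t) ^ 2)) := by
          simp only [qd, map_mul, map_pow, XZ, conj_conj]
          ring
        rw [this, Complex.add_conj, Complex.add_conj, Complex.add_re, Complex.ofReal_re,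
          Complex.ofReal_re]
      show (S t + I * q t).im = 2 * (Z z1 x1 t * conj (Z ζ η t)).re
          + 2 * (Z z2 x2 t * conj (Z ζ η t) ^ 2).re
      rw [← e2]
      simp [im0]
    have T := ht _ mem
    change (e (A t)).im = 2 * (f (A t) * conj (Z ζ η t) + g (A t) * conj (Z ζ η t) ^ 2
      + h (A t) * (conj (Z z1 x1 t) + 2 * conj (Z z2 x2 t) * Z ζ η t)).re at T
    have T1 := Complex.sub_conj (e (A t))
    set Y : ℂ := f (A t) * conj (Z ζ η t) + g (A t) * conj (Z ζ η t) ^ 2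
      + h (A t) * (conj (Z z1 x1 t) + 2 * conj (Z z2 x2 t) * Z ζ η t) with Yd
    have T2 := Complex.add_conj Y
    have T3 : conj Y = conj (f (A t)) * Z ζ η t + conj (g (A t)) * Z ζ η t ^ 2
      + conj (h (A t)) * (Z z1 x1 t + 2 * Z z2 x2 t * conj (Z ζ η t)) := by
      simp only [Yd, map_add, map_mul, map_pow, conj_conj, Complex.conj_ofNat]
    have e3 : φ t = (e (A t) - conj (e (A t))) - 2 * I * (Y + conj Y) := by
      simp only [φd, fBd, gBd, hBd, eBd, BA, T3, XZ]
      rw [Yd]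
      ring
    rw [e3, T1, T2, T]
    push_cast
    ring
  have hz := (dφ.analyticOnNhd Metric.isOpen_ball).eqOn_zero_of_preconnected_of_mem_closure
    (convex_ball (0 : ℂ) 2).isPreconnected (z₀ := 0) (Metric.mem_ball_self (by norm_num)) (by
      rw [Metric.mem_closure_iff]
      intro ε hε
      have hm : 0 < min ε 1 / 2 := by positivity
      refine ⟨((min ε 1 / 2 : ℝ) : ℂ), ⟨zero_real _ ?_, ?_⟩, ?_⟩
      · rw [abs_of_pos hm]
        have := min_le_right ε 1
        linarith
      · simpa using hm.ne'
      · rw [dist_comm, dist_zero_right, Complex.norm_real, Real.norm_eq_abs, abs_of_pos hm]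
        have := min_le_left ε 1
        linarith)
  have fin : φ I = 0 := hz (by rw [mem_ball_zero_iff, Complex.norm_I]; norm_num)
  have ZI : ∀ z x, Z z x I = z := by
    intro z x
    simp only [Zd]
    linear_combination (-(z - conj x) / 2) * I_mul_I
  have XI : ∀ z x, X z x I = x := by
    intro z x
    simp only [Xd, map_div₀, map_add, map_sub, conj_conj, Complex.conj_ofNat]
    linear_combination ((conj z - x) / 2) * I_mul_I
  have SI : S I = S0 := by
    simp only [Sd]
    rw [mul_comm, Complex.re_add_im]
  have qI : q I = z1 * η + x1 * ζ + z2 * η ^ 2 + x2 * ζ ^ 2 := by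
    simp only [qd, ZI, XI]
  have AI : A I = ![z1, z2, ζ, w] := by
    simp only [Ad, ZI, SI, qI]
    rw [show S0 + I * (z1 * η + x1 * ζ + z2 * η ^ 2 + x2 * ζ ^ 2) = w by
      rw [S0d, hw, hω]; ring]
  have BI : B I = ![x1, x2, η, ω] := by
    simp only [Bd, XI, SI, qI]
    rw [show S0 - I * (z1 * η + x1 * ζ + z2 * η ^ 2 + x2 * ζ ^ 2) = ω by
      rw [S0d, hw, hω]; ring]
  simp only [φd, AI, BI, ZI, XI] at fin
  exact sub_eq_zero.1 fin

lemma local_model {f g h e : E4 → ℂ} {V : Set E4} (hV : IsOpen V) (h0 : (0 : E4) ∈ V)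
    (hf : DifferentiableOn ℂ f V) (hg : DifferentiableOn ℂ g V)
    (hh : DifferentiableOn ℂ h V) (he : DifferentiableOn ℂ e V)
    (ht : TangentOn f g h e V) :
    ∃ P : Params, f =ᶠ[𝓝 0] mF P ∧ g =ᶠ[𝓝 0] mG P ∧ h =ᶠ[𝓝 0] mH P ∧ e =ᶠ[𝓝 0] mE P := by
  obtain ⟨R, hR, hsub⟩ := Metric.isOpen_iff.1 hV 0 h0
  have hf := hf.mono hsub
  have hg := hg.mono hsub
  have hh := hh.mono hsub
  have he := he.mono hsub
  have ht : TangentOn f g h e (Metric.ball 0 R) := fun p hp => ht p ⟨hp.1, hsub hp.2⟩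
  have hr0 : 0 < min (1 / 100) (R / 100) := by positivity
  have hr1 : min (1 / 100) (R / 100) ≤ 1 / 100 := min_le_left _ _
  have hr2 : 100 * min (1 / 100) (R / 100) ≤ R := by
    have := min_le_right (1 / 100) (R / 100)
    linarith
  have H := complexify hR hf hg hh he ht hr1 hr2
  have z0 : (![0, 0, 0, 0] : E4) = 0 := by
    funext i
    fin_cases i <;> rfl
  have cj : ∀ F : ℂ → ℂ, DifferentiableAt ℂ F 0 →
      DifferentiableAt ℂ (fun w => conj (F (conj w))) 0 := by
    intro F hF
    have : DifferentiableAt ℂ F (conj 0) := by simpa using hF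
    have := this.conj_conj
    simpa [Function.comp_def] using this
  have de : DifferentiableAt ℂ
      (fun w => bar (fun a b c d => e ![a, b, c, d]) 0 0 0 w) 0 := by
    have h1 : DifferentiableAt ℂ (fun w : ℂ => e ![0, 0, 0, w]) 0 := by
      have h2 : DifferentiableAt ℂ (fun w : ℂ => (![0, 0, 0, w] : E4)) 0 :=
        (diff_vec4 (differentiable_const 0) (differentiable_const 0) (differentiable_const 0)
          differentiable_id) 0
      have h3 : DifferentiableAt ℂ e ((fun w : ℂ => (![0, 0, 0, w] : E4)) 0) := by
        simp only [z0]
        exact he.differentiableAt (Metric.ball_mem_nhds _ hR)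
      exact h3.comp 0 h2
    simpa [bar] using cj _ h1
  have dh : DifferentiableAt ℂ
      (fun w => bar (fun a b c d => h ![a, b, c, d]) 0 0 w 0) 0 := by
    have h1 : DifferentiableAt ℂ (fun w : ℂ => h ![0, 0, w, 0]) 0 := by
      have h2 : DifferentiableAt ℂ (fun w : ℂ => (![0, 0, w, 0] : E4)) 0 :=
        (diff_vec4 (differentiable_const 0) (differentiable_const 0) 
          differentiable_id (differentiable_const 0)) 0
      have h3 : DifferentiableAt ℂ h ((fun w : ℂ => (![0, 0, w, 0] : E4)) 0) := by
        simp only [z0]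
        exact hh.differentiableAt (Metric.ball_mem_nhds _ hR)
      exact h3.comp 0 h2
    simpa [bar] using cj _ h1
  obtain ⟨r', hr', P, hP⟩ := local_class hr0 (hr1.trans (by norm_num)) H de dh
  have ev : ∀ᶠ p : E4 in 𝓝 0, f p = mF P p ∧ g p = mG P p ∧ h p = mH P p ∧ e p = mE P p := by
    filter_upwards [Metric.ball_mem_nhds (0 : E4) hr'] with p hp
    rw [mem_ball_zero_iff, pi_norm_lt_iff hr'] at hp
    have := hP (p 0) (p 1) (p 2) (p 3) (hp 0) (hp 1) (hp 2) (hp 3)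
    have hpe : (![p 0, p 1, p 2, p 3] : E4) = p := by
      funext i
      fin_cases i <;> rfl
    simpa only [hpe] using this
  exact ⟨P, ev.mono fun p hp => hp.1, ev.mono fun p hp => hp.2.1, ev.mono fun p hp => hp.2.2.1,
    ev.mono fun p hp => hp.2.2.2⟩

lemma ident_thm {f k : E4 → ℂ} {U : Set E4} (hUo : IsOpen U) (hUc : IsPreconnected U)
    (h0 : (0 : E4) ∈ U) (hf : DifferentiableOn ℂ f U) (hk : DifferentiableOn ℂ k U)
    (hfk : f =ᶠ[𝓝 0] k) : ∀ p ∈ U, f p = k p := by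
  set T : Set E4 := {x | f =ᶠ[𝓝 x] k} with Td
  have hT : IsOpen T := isOpen_setOf_eventually_nhds
  have key : U ⊆ T := by
    apply hUc.subset_of_closure_inter_subset hT ⟨0, h0, hfk⟩
    rintro y ⟨hy, hyU⟩
    obtain ⟨R, hR, hsub⟩ := Metric.isOpen_iff.1 hUo y hyU
    obtain ⟨x, hxT, hxy⟩ := Metric.mem_closure_iff.1 hy R hR
    have hx : x ∈ Metric.ball y R := by rwa [Metric.mem_ball, dist_comm]
    show f =ᶠ[𝓝 y] k
    filter_upwards [Metric.ball_mem_nhds y hR] with p hp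
    have dl : Differentiable ℂ (fun t : ℂ => x + t • (p - x)) := by fun_prop
    set D : Set ℂ := (fun t : ℂ => x + t • (p - x)) ⁻¹' Metric.ball y R with Dd
    have hDo : IsOpen D := Metric.isOpen_ball.preimage dl.continuous
    have hDc : Convex ℝ D := by
      intro a ha b hb u v hu hv huv
      have := convex_ball y R ha hb hu hv huv
      show x + (u • a + v • b) • (p - x) ∈ Metric.ball y R
      convert! this using 1
      have huv' : (u : ℂ) + v = 1 := by exact_mod_cast huv
      funext i
      simp only [Pi.add_apply, Pi.smul_apply, Pi.sub_apply, smul_eq_mul, Complex.real_smul]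
      linear_combination (-(x i)) * huv'
    have m : Set.MapsTo (fun t : ℂ => x + t • (p - x)) D U := fun t ht => hsub ht
    have d1 : DifferentiableOn ℂ (fun t : ℂ => f (x + t • (p - x))) D :=
      hf.comp dl.differentiableOn m
    have d2 : DifferentiableOn ℂ (fun t : ℂ => k (x + t • (p - x))) D :=
      hk.comp dl.differentiableOn m
    have ev : (fun t : ℂ => f (x + t • (p - x))) =ᶠ[𝓝 0] (fun t : ℂ => k (x + t • (p - x))) := by
      have c : Tendsto (fun t : ℂ => x + t • (p - x)) (𝓝 0) (𝓝 x) := by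
        have := dl.continuous.tendsto 0
        simpa using this
      exact c.eventually hxT
    have := (d1.analyticOnNhd hDo).eqOn_of_preconnected_of_eventuallyEq (d2.analyticOnNhd hDo)
      hDc.isPreconnected (z₀ := 0) (by simpa [Dd] using hx) ev
      (show (1 : ℂ) ∈ D by simpa [Dd] using hp)
    simpa using this
  intro p hp
  exact (key hp).eq_of_nhds

lemma diff_m (P : Params) : Differentiable ℂ (mF P) ∧ Differentiable ℂ (mG P) ∧
    Differentiable ℂ (mH P) ∧ Differentiable ℂ (mE P) := by
  refine ⟨?_, ?_, ?_, ?_⟩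
  · unfold mF; fun_prop
  · unfold mG; fun_prop
  · unfold mH; fun_prop
  · unfold mE; fun_prop

lemma params_unique {P P' : Params} (hF : mF P =ᶠ[𝓝 0] mF P') (hG : mG P =ᶠ[𝓝 0] mG P')
    (hH : mH P =ᶠ[𝓝 0] mH P') (hE : mE P =ᶠ[𝓝 0] mE P') : P = P' := by
  have F := fun p => ident_thm isOpen_univ isPreconnected_univ (Set.mem_univ _)
    (diff_m P).1.differentiableOn (diff_m P').1.differentiableOn hF p (Set.mem_univ _)
  have G := fun p => ident_thm isOpen_univ isPreconnected_univ (Set.mem_univ _)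
    (diff_m P).2.1.differentiableOn (diff_m P').2.1.differentiableOn hG p (Set.mem_univ _)
  have H := fun p => ident_thm isOpen_univ isPreconnected_univ (Set.mem_univ _)
    (diff_m P).2.2.1.differentiableOn (diff_m P').2.2.1.differentiableOn hH p (Set.mem_univ _)
  have E := fun p => ident_thm isOpen_univ isPreconnected_univ (Set.mem_univ _)
    (diff_m P).2.2.2.differentiableOn (diff_m P').2.2.2.differentiableOn hE p (Set.mem_univ _)
  obtain ⟨d, κ, l, n, a, b, c, m, M, N⟩ := P
  obtain ⟨d', κ', l', n', a', b', c', m', M', N'⟩ := P'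
  have a0 : a = a' := by simpa [mF] using F 0
  have b0 : b = b' := by simpa [mG] using G 0
  have c0 : c = c' := by simpa [mH] using H 0
  have d0 : d = d' := by simpa [mE] using E 0
  subst a0 b0 c0 d0
  have N0 : N = N' := by simpa [mF] using F ![0, 0, 0, 1]
  have M0 : M = M' := by simpa [mF] using F ![1, 0, 0, 0]
  have l0 : l = l' := by simpa [mE] using E ![0, 0, 0, 1]
  subst N0 M0 l0
  have k1 := F ![0, 0, 1, 0]
  have k2 := F ![0, 0, -1, 0]
  simp [mF] at k1 k2
  have m0 : m = m' := by linear_combination (k1 + k2) / 2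
  subst m0
  have κ0 : κ = κ' := by simpa using k1
  have n0 : n = n' := by simpa [mG] using G ![0, 0, 1, 0]
  subst κ0 n0
  rfl

lemma model_tangent (P : Params) (U : Set E4) : TangentOn (mF P) (mG P) (mH P) (mE P) U := by
  rintro p ⟨hp, -⟩
  have hp' : p 3 - conj (p 3) = 2 * I * (p 0 * conj (p 2) + conj (p 0) * p 2
      + p 1 * conj (p 2) ^ 2 + conj (p 1) * p 2 ^ 2) := by
    have e1 := Complex.sub_conj (p 3)
    have e2 := Complex.add_conj (p 0 * conj (p 2))
    have e3 := Complex.add_conj (p 1 * conj (p 2) ^ 2)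
    simp only [map_mul, map_pow, conj_conj] at e2 e3
    have hq : (p 3).im = 2 * (p 0 * conj (p 2)).re + 2 * (p 1 * (conj (p 2)) ^ 2).re := hp
    rw [e1, hq]
    push_cast at e2 e3 ⊢
    linear_combination (-2 * I) * e2 + (-2 * I) * e3
  set Y : ℂ := mF P p * conj (p 2) + mG P p * (conj (p 2)) ^ 2
      + mH P p * (conj (p 0) + 2 * conj (p 1) * p 2) with Yd
  have e1 := Complex.sub_conj (mE P p)
  have e2 := Complex.add_conj Y
  have main : mE P p - conj (mE P p) = 2 * I * (Y + conj Y) := by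
    rw [Yd]
    simp only [mE, mF, mG, mH, map_add, map_mul, map_pow, map_sub, conj_conj, conj_I,
      conj_ofReal, Complex.conj_ofNat]
    have hw : p 3 = conj (p 3) + 2 * I * (p 0 * conj (p 2) + conj (p 0) * p 2
      + p 1 * conj (p 2) ^ 2 + conj (p 1) * p 2 ^ 2) := by linear_combination hp'
    generalize conj (p 3) = w' at *
    rw [hw]
    ring_nf
  rw [e1, e2] at main
  have h3 : (2 * I) * ((mE P p).im - 2 * Y.re : ℂ) = 0 := by
    push_cast at main
    linear_combination main
  have h4 : ((mE P p).im - 2 * Y.re : ℂ) = 0 := by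
    rcases mul_eq_zero.1 h3 with h | h
    · simp at h
    · exact h
  have h5 : (mE P p).im - 2 * Y.re = 0 := by exact_mod_cast h4
  linarith

def toP (x : (Fin 4 → ℝ) × (Fin 6 → ℂ)) : Params :=
  ⟨x.1 0, x.1 1, x.1 2, x.1 3, x.2 0, x.2 1, x.2 2, x.2 3, x.2 4, x.2 5⟩

lemma toP_inj {x y : (Fin 4 → ℝ) × (Fin 6 → ℂ)} (h : toP x = toP y) : x = y := by
  simp only [toP, Params.mk.injEq] at h
  obtain ⟨h1, h2, h3, h4, h5, h6, h7, h8, h9, h10⟩ := h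
  apply Prod.ext
  · funext i
    fin_cases i <;> assumption
  · funext i
    fin_cases i <;> assumption

noncomputable def toGerms : ((Fin 4 → ℝ) × (Fin 6 → ℂ)) →ₗ[ℝ] G4 × G4 × G4 × G4 where
  toFun x := (((mF (toP x) : E4 → ℂ) : G4), ((mG (toP x) : E4 → ℂ) : G4),
    ((mH (toP x) : E4 → ℂ) : G4), ((mE (toP x) : E4 → ℂ) : G4))
  map_add' x y := by
    simp only [Prod.mk_add_mk, ← Filter.Germ.coe_add]
    refine Prod.ext ?_ (Prod.ext ?_ (Prod.ext ?_ ?_))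
    · refine congrArg (fun F : E4 → ℂ => (F : G4)) (funext fun p => ?_)
      simp [mF, toP]; ring
    · refine congrArg (fun F : E4 → ℂ => (F : G4)) (funext fun p => ?_)
      simp [mG, toP]; ring
    · refine congrArg (fun F : E4 → ℂ => (F : G4)) (funext fun p => ?_)
      simp [mH, toP]; ring
    · refine congrArg (fun F : E4 → ℂ => (F : G4)) (funext fun p => ?_)
      simp [mE, toP]; ring
  map_smul' c x := by
    simp only [Prod.smul_mk, RingHom.id_apply, ← Filter.Germ.coe_smul]
    refine Prod.ext ?_ (Prod.ext ?_ (Prod.ext ?_ ?_))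
    · refine congrArg (fun F : E4 → ℂ => (F : G4)) (funext fun p => ?_)
      simp [mF, toP]; ring
    · refine congrArg (fun F : E4 → ℂ => (F : G4)) (funext fun p => ?_)
      simp [mG, toP]; ring
    · refine congrArg (fun F : E4 → ℂ => (F : G4)) (funext fun p => ?_)
      simp [mH, toP]; ring
    · refine congrArg (fun F : E4 → ℂ => (F : G4)) (funext fun p => ?_)
      simp [mE, toP]; ring

lemma toGerms_inj : Function.Injective toGerms := by
  intro x y hxy
  have h1 := congrArg Prod.fst hxy
  have h2 := congrArg (fun t => t.2.1) hxy
  have h3 := congrArg (fun t => t.2.2.1) hxy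
  have h4 := congrArg (fun t => t.2.2.2) hxy
  exact toP_inj (params_unique (Filter.Germ.coe_eq.1 h1) (Filter.Germ.coe_eq.1 h2)
    (Filter.Germ.coe_eq.1 h3) (Filter.Germ.coe_eq.1 h4))

lemma toGerms_range : (LinearMap.range toGerms : Set (G4 × G4 × G4 × G4)) = tangentGerms := by
  ext t
  constructor
  · rintro ⟨x, rfl⟩
    obtain ⟨d1, d2, d3, d4⟩ := diff_m (toP x)
    exact ⟨_, _, _, _, rfl, Set.univ, isOpen_univ, Set.mem_univ _, d1.differentiableOn,
      d2.differentiableOn, d3.differentiableOn, d4.differentiableOn, model_tangent _ _⟩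
  · rintro ⟨f, g, h, e, rfl, V, hV, h0, hf, hg, hh, he, ht⟩
    obtain ⟨P, h1, h2, h3, h4⟩ := local_model hV h0 hf hg hh he ht
    refine ⟨(![P.d, P.κ, P.l, P.n], ![P.a, P.b, P.c, P.m, P.M, P.N]), ?_⟩
    exact Prod.ext (Filter.Germ.coe_eq.2 h1.symm) (Prod.ext (Filter.Germ.coe_eq.2 h2.symm)
      (Prod.ext (Filter.Germ.coe_eq.2 h3.symm) (Filter.Germ.coe_eq.2 h4.symm)))

lemma toGerms_rank : Module.rank ℝ ↥(LinearMap.range toGerms) = 16 := by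
  have e := (LinearEquiv.ofInjective toGerms toGerms_inj).finrank_eq
  have h2 : Module.finrank ℝ ((Fin 4 → ℝ) × (Fin 6 → ℂ)) = 16 := by
    rw [Module.finrank_prod, Module.finrank_fin_fun, Module.finrank_pi_fintype]
    simp [Complex.finrank_real_complex]
  rw [h2] at e
  rw [← Module.finrank_eq_rank, ← e]
  norm_num

/-- Theorem 15: every holomorphic 4-tuple tangent to `Q` on a connected open
neighborhood `U` of `0` is given by a unique choice of the 16 real parameters; hence the
space of germs at `0` of tangent holomorphic 4-tuples has real dimension exactly 16. -/
theorem stmt_8 (U : Set E4) (hUo : IsOpen U) (hUc : IsConnected U) (hU0 : (0 : E4) ∈ U)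
    (f g h e : E4 → ℂ)
    (hf : DifferentiableOn ℂ f U) (hg : DifferentiableOn ℂ g U)
    (hh : DifferentiableOn ℂ h U) (he : DifferentiableOn ℂ e U)
    (htan : TangentOn f g h e U) :
    (∃! P : Params, ∀ p ∈ U,
      f p = mF P p ∧ g p = mG P p ∧ h p = mH P p ∧ e p = mE P p) ∧
    (∃ W : Submodule ℝ (G4 × G4 × G4 × G4),
      (W : Set (G4 × G4 × G4 × G4)) = tangentGerms ∧ Module.rank ℝ ↥W = 16) := by

  refine ⟨?_, LinearMap.range toGerms, toGerms_range, toGerms_rank⟩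
  obtain ⟨P, h1, h2, h3, h4⟩ := local_model hUo hU0 hf hg hh he htan
  obtain ⟨d1, d2, d3, d4⟩ := diff_m P
  have pc := hUc.isPreconnected
  refine ⟨P, fun p hp => ⟨ident_thm hUo pc hU0 hf d1.differentiableOn h1 p hp,
    ident_thm hUo pc hU0 hg d2.differentiableOn h2 p hp,
    ident_thm hUo pc hU0 hh d3.differentiableOn h3 p hp,
    ident_thm hUo pc hU0 he d4.differentiableOn h4 p hp⟩, ?_⟩
  intro P' hP'
  have ev : ∀ᶠ p in 𝓝 (0 : E4), p ∈ U := hUo.mem_nhds hU0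
  apply params_unique
  · filter_upwards [ev, h1] with p hp hq
    rw [← (hP' p hp).1, hq]
  · filter_upwards [ev, h2] with p hp hq
    rw [← (hP' p hp).2.1, hq]
  · filter_upwards [ev, h3] with p hp hq
    rw [← (hP' p hp).2.2.1, hq]
  · filter_upwards [ev, h4] with p hp hq
    rw [← (hP' p hp).2.2.2, hq]
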